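/- There exists a constant δ > 0 such that for every positive integer k there exist a constant c > 0 and an integer n0 such that for all n ≥ n0: the number of graphs G in (Ex (k+1)C)_n that have a blocker B with S(G) ⊄ B and |B| ≤ δn is at most e^{-c n} · |(Ex (k+1)C)_n|. That is, with probability 1 − e^{-Ω(n)}, every blocker of G not containing S(G) has size greater than δn. -/

import Mathlib

/-!
The argument compares an upper bound for the exceptional graphs with the lower bound
`2 ^ (k n) n ^ n e ^ (-o(n))` for the whole class, both obtained by describing a graph as a few
special vertices plus a forest. Cycles are replaced by cores (`Core`), vertex sets inducing
minimum degree at least two.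

*Structure* (`exists_decomp`). A graph without `k + 1` disjoint cycles has a blocker of size
`r = O(log n)` (`exists_small_blocker`, by suppressing vertices of degree two and removing
logarithmic cycles). For each vertex `u` of this blocker, either many disjoint paths of the
remaining forest close up to cycles through `u`, or few forest vertices meet all such cycles
(`flower`). At most `k` vertices are of the first kind, since otherwise disjoint cycles through
`k + 1` of them could be chosen greedily (`greedy_petals`). So the vertex set splits into `K` with
`|K| ≤ k`, a set `M` with `|M| ≤ r`, and a forest, given by a parent function, in which a set `X`
of `O(r √n)` vertices meets every cycle through a single vertex of `M`. Only boundedly many forest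
components left by `X` receive more than `2 k + 1` edges from `M` (`heavy_le`), which bounds the
number of edges at `M` by the number of these components (`cross_le`).

*Counting.* Such a graph is determined by `K`, `M`, the parent function (`n ^ n` choices up to
lower-order factors), the edges at `K` (`2 ^ (k n)` choices) and the edges at `M`. All secondary
choices are counted by exponential weights: choosing at most `j` elements of a set of size `s`
costs at most `z ^ (-j) (1 + z) ^ s` (`card_SS_le`), and the weight of the number of components
factorises over the parent function (`sum_par_le`).

Suppose a small blocker `B` misses a vertex `v` of degree above `n / log n`.
* If `v ∉ K`, then about `n / log n` vertices have no parent or a parent among the `O(r √n)`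
  vertices of `X` and `v`. Charging each of them a factor `n ^ (1 / 4)` shows that this has
  probability at most `e ^ (-n / 4 + o(n))` (`card_big_outside`).
* If `v ∈ K`, then `v` has at most one neighbour in each component of the forest left by `B`, so
  its neighbourhood is described by few choices and the factor `2 ^ n` for `v` is lost. For
  `|B| ≤ n / 100` this outweighs the cost of describing `B` and the neighbourhood
  (`card_missing`).

The lower bound `exCount_ge` counts graphs consisting of a forest off a fixed `k`-set together with
arbitrary edges to that set; forests are counted by a Cayley-type induction
(`card_rootedForests`).
-/

open SimpleGraph Filter Real

def IsBlocker {V : Type*} (G : SimpleGraph V) (B : Set V) : Prop :=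
  (G.induce Bᶜ).IsAcyclic

def HasDisjointCycles {V : Type*} (G : SimpleGraph V) (m : ℕ) : Prop :=
  ∃ c : Fin m → (Σ v : V, G.Walk v v),
    (∀ i, (c i).2.IsCycle) ∧
    ∀ i j, i ≠ j → ∀ v, v ∈ (c i).2.support → v ∉ (c j).2.support

noncomputable def apexCount (n k : ℕ) : ℕ :=
  Nat.card {G : SimpleGraph (Fin n) // ∃ B : Finset (Fin n), B.card ≤ k ∧ IsBlocker G ↑B}

noncomputable def exCount (n k : ℕ) : ℕ :=
  Nat.card {G : SimpleGraph (Fin n) // ¬ HasDisjointCycles G k}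

noncomputable def forestCount (n : ℕ) : ℕ :=
  Nat.card {G : SimpleGraph (Fin n) // G.IsAcyclic}

def IsSpike {V : Type*} (G : SimpleGraph V) (u v : V) : Prop :=
  G.Adj u v ∧ (G.neighborSet u).ncard = 1 ∧ (G.neighborSet v).ncard = 2 ∧
  ¬ ∃ a b c : V, a ≠ b ∧ b ≠ c ∧ a ≠ c ∧ G.Adj a b ∧ G.Adj b c ∧ ¬ G.Adj a c ∧
      (G.connectedComponentMk u).supp = {a, b, c}

/-- The set of vertices of degree greater than n / ln n. -/
def bigDegSet (n : ℕ) (G : SimpleGraph (Fin n)) : Set (Fin n) :=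
  {v : Fin n | (n : ℝ) / Real.log n < ((G.neighborSet v).ncard : ℝ)}

namespace FDC

/-! ### Cores: vertex sets inducing minimum degree at least two -/

open Classical in
/-- The neighbours of `x` inside the finite set `S`. -/
noncomputable def nb {V : Type*} (G : SimpleGraph V) (S : Finset V) (x : V) : Finset V :=
  S.filter (fun y => G.Adj x y)

@[simp] lemma mem_nb {V : Type*} {G : SimpleGraph V} {S : Finset V} {x y : V} :
    y ∈ nb G S x ↔ y ∈ S ∧ G.Adj x y := by
  classical
  simp [nb]

lemma nb_mono {V : Type*} {G : SimpleGraph V} {S T : Finset V} (h : S ⊆ T) (x : V) :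
    nb G S x ⊆ nb G T x := by
  intro y; simp only [mem_nb]; exact fun ⟨a, b⟩ => ⟨h a, b⟩

/-- A core of `G` is a nonempty finite vertex set inducing a subgraph of minimum degree at
least two. A set contains the vertices of a cycle if and only if it contains a core, so cores
replace cycles throughout. -/
def Core {V : Type*} (G : SimpleGraph V) (S : Finset V) : Prop :=
  S.Nonempty ∧ ∀ x ∈ S, 2 ≤ (nb G S x).card

/-- No subset of `W` is a core: `G` induces a forest on `W`. -/
def NoCore {V : Type*} (G : SimpleGraph V) (W : Finset V) : Prop :=
  ∀ S ⊆ W, ¬ Core G S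

/-- There are `m` pairwise disjoint cores inside `W`. -/
def Packs {V : Type*} (G : SimpleGraph V) (W : Finset V) (m : ℕ) : Prop :=
  ∃ S : Fin m → Finset V, (∀ i, Core G (S i)) ∧ (∀ i, S i ⊆ W) ∧
    ∀ i j, i ≠ j → Disjoint (S i) (S j)

lemma NoCore.mono {V : Type*} {G : SimpleGraph V} {W W' : Finset V} (h : NoCore G W)
    (hs : W' ⊆ W) : NoCore G W' := fun S hS => h S (hS.trans hs)

lemma core_of_cycle {V : Type*} [DecidableEq V] {G : SimpleGraph V} {v : V} {w : G.Walk v v}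
    (hw : w.IsCycle) : Core G w.support.toFinset := by
  refine ⟨⟨v, by simp⟩, fun x hx => ?_⟩
  have hx' : x ∈ w.support := by simpa using hx
  have h2 := hw.ncard_neighborSet_toSubgraph_eq_two hx'
  rw [← h2, ← Set.ncard_coe_finset]
  apply Set.ncard_le_ncard _ (Finset.finite_toSet _)
  intro y hy
  have hy' : w.toSubgraph.Adj x y := hy
  simp only [Finset.mem_coe, mem_nb, List.mem_toFinset]
  refine ⟨?_, hy'.adj_sub⟩
  have := hy'.snd_mem
  simpa using this

lemma not_acyclic_of_core {V : Type*} {G : SimpleGraph V} {S : Finset V}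
    (h : Core G S) : ¬ (G.induce (S : Set V)).IsAcyclic := by
  classical
  intro hac
  obtain ⟨⟨x, hx⟩, hS⟩ := h
  set H := G.induce (S : Set V) with hH
  set c := H.connectedComponentMk ⟨x, hx⟩ with hc
  have hT := hac.isTree_connectedComponent c
  have key : ∀ v : c.supp, ∃ a b : c.supp, a ≠ b ∧ c.toSimpleGraph.Adj v a ∧
      c.toSimpleGraph.Adj v b := by
    rintro ⟨⟨v, hv⟩, hvc⟩
    have h2 := hS v hv
    obtain ⟨a, ha, b, hb, hab⟩ := Finset.one_lt_card.1 (by omega : 1 < (nb G S v).card)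
    simp only [mem_nb] at ha hb
    have hva : H.Adj ⟨v, hv⟩ ⟨a, ha.1⟩ := ha.2
    have hvb : H.Adj ⟨v, hv⟩ ⟨b, hb.1⟩ := hb.2
    refine ⟨⟨⟨a, ha.1⟩, ?_⟩, ⟨⟨b, hb.1⟩, ?_⟩, ?_, ?_, ?_⟩
    · rw [ConnectedComponent.mem_supp_iff] at hvc ⊢
      rw [← hvc]; exact ConnectedComponent.sound hva.symm.reachable
    · rw [ConnectedComponent.mem_supp_iff] at hvc ⊢
      rw [← hvc]; exact ConnectedComponent.sound hvb.symm.reachable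
    · intro h; apply hab; simpa using h
    · exact hva
    · exact hvb
  have : Nontrivial c.supp := by
    obtain ⟨a, b, hab, -, -⟩ := key ⟨⟨x, hx⟩, by rw [ConnectedComponent.mem_supp_iff]⟩
    exact ⟨a, b, hab⟩
  obtain ⟨v, hv⟩ := hT.exists_vert_degree_one_of_nontrivial
  rw [degree_eq_one_iff_existsUnique_adj] at hv
  obtain ⟨a, b, hab, ha, hb⟩ := key v
  exact hab (hv.unique ha hb)

lemma cycle_of_core {V : Type*} {G : SimpleGraph V} {S : Finset V}
    (h : Core G S) : ∃ (v : V) (w : G.Walk v v), w.IsCycle ∧ ∀ x ∈ w.support, x ∈ S := by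
  have := not_acyclic_of_core h
  simp only [IsAcyclic, not_forall, not_not] at this
  obtain ⟨v, w, hw⟩ := this
  let f : G.induce (S : Set V) →g G := (Embedding.induce (G := G) (S : Set V)).toHom
  have hf : Function.Injective f := (Embedding.induce (G := G) (S : Set V)).injective
  refine ⟨f v, w.map f, hw.map hf, ?_⟩
  intro x hx
  rw [Walk.support_map] at hx
  obtain ⟨y, -, rfl⟩ := List.mem_map.1 hx
  exact y.2

lemma hasDisjointCycles_iff {V : Type*} [Fintype V] (G : SimpleGraph V) (m : ℕ) :
    HasDisjointCycles G m ↔ Packs G Finset.univ m := by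
  classical
  constructor
  · rintro ⟨c, hc, hd⟩
    refine ⟨fun i => (c i).2.support.toFinset, fun i => core_of_cycle (hc i), by simp, ?_⟩
    intro i j hij
    rw [Finset.disjoint_left]
    intro x hx hx'
    exact hd i j hij x (by simpa using hx) (by simpa using hx')
  · rintro ⟨S, hS, -, hd⟩
    choose v w hw hs using fun i => cycle_of_core (hS i)
    refine ⟨fun i => ⟨v i, w i⟩, hw, ?_⟩
    intro i j hij x hx hx'
    exact Finset.disjoint_left.1 (hd i j hij) (hs i x hx) (hs j x hx')

lemma noCore_of_blocker {V : Type*} {G : SimpleGraph V} {B : Set V} (hB : IsBlocker G B)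
    {W : Finset V} (hW : ∀ x ∈ W, x ∉ B) : NoCore G W := by
  intro S hS hc
  apply not_acyclic_of_core hc
  have hsub : (S : Set V) ⊆ Bᶜ := fun x hx => hW x (hS hx)
  exact IsAcyclic.embedding (SimpleGraph.induceHomOfLE G hsub) hB

lemma NoCore.exists_leaf {V : Type*} {G : SimpleGraph V} {W : Finset V} (h : NoCore G W)
    (hne : W.Nonempty) : ∃ x ∈ W, (nb G W x).card ≤ 1 := by
  by_contra! hc
  exact h W subset_rfl ⟨hne, fun x hx => hc x hx⟩

/-- A nonempty set spanning at least as many edges as it has vertices contains a core: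
repeatedly deleting a vertex of degree at most one preserves the inequality. -/
lemma core_of_edges {V : Type*} [DecidableEq V] {G : SimpleGraph V} :
    ∀ (N : ℕ) (S : Finset V) (E : Finset (Sym2 V)), S.card = N →
    (∀ e ∈ E, e ∈ G.edgeSet) → (∀ e ∈ E, ∀ x ∈ e, x ∈ S) → S.card ≤ E.card → S.Nonempty →
    ¬ NoCore G S := by
  intro N
  induction N with
  | zero =>
    intro S E hS _ _ _ hne _
    rw [Finset.card_eq_zero] at hS; simp [hS] at hne
  | succ N ih =>
    intro S E hS hE hES hle hne hno
    obtain ⟨x, hx, hdeg⟩ := hno.exists_leaf hne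
    set E' := E.filter (fun e => x ∉ e) with hE'
    have hsmall : (E.filter (fun e => ¬ x ∉ e)).card ≤ (nb G S x).card := by
      have : E.filter (fun e => ¬ x ∉ e) ⊆ (nb G S x).image (fun y => s(x, y)) := by
        intro e he
        simp only [Finset.mem_filter, not_not] at he
        obtain ⟨he, hxe⟩ := he
        obtain ⟨y, rfl⟩ := hxe
        simp only [Finset.mem_image, mem_nb]
        refine ⟨y, ⟨hES _ he y (by simp), ?_⟩, rfl⟩
        exact hE _ he
      exact (Finset.card_le_card this).trans Finset.card_image_le
    have hsum := Finset.card_filter_add_card_filter_not (s := E) (fun e => x ∉ e)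
    have hSc : (S.erase x).card = N := by rw [Finset.card_erase_of_mem hx]; omega
    have hsub : S.erase x ⊆ S := Finset.erase_subset _ _
    have hEE : ∀ e ∈ E', ∀ y ∈ e, y ∈ S.erase x := by
      intro e he y hy
      simp only [hE', Finset.mem_filter] at he
      rw [Finset.mem_erase]
      refine ⟨?_, hES e he.1 y hy⟩
      rintro rfl; exact he.2 hy
    rcases (S.erase x).eq_empty_or_nonempty with hem | hne'
    · have h0 : nb G S x = ∅ := by
        rw [Finset.eq_empty_iff_forall_notMem]
        intro y hy
        simp only [mem_nb] at hy
        have : y ∈ S.erase x := Finset.mem_erase.2 ⟨hy.2.ne', hy.1⟩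
        simp [hem] at this
      have hE0 : E' = ∅ := by
        rw [Finset.eq_empty_iff_forall_notMem]
        intro e he
        induction e with
        | _ a b =>
          have := hEE _ he a (by simp)
          simp [hem] at this
      rw [h0] at hsmall
      simp only [← hE', hE0, Finset.card_empty] at hsum hsmall
      have := Finset.card_pos.2 hne
      omega
    · refine ih (S.erase x) E' hSc (fun e he => hE e (Finset.mem_filter.1 he).1) hEE ?_ hne'
        (hno.mono hsub)
      rw [← hE'] at hsum
      omega

/-! ### Short cycles and logarithmic blockers -/

lemma exists_parent {V : Type*} (H : SimpleGraph V) (v : V) :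
    ∃ par : V → V, ∀ y, H.Reachable v y → y ≠ v →
      H.Adj y (par y) ∧ H.Reachable v (par y) ∧ H.dist v (par y) + 1 = H.dist v y := by
  classical
  have key : ∀ y, ∃ z, H.Reachable v y → y ≠ v →
      H.Adj y z ∧ H.Reachable v z ∧ H.dist v z + 1 = H.dist v y := by
    intro y
    by_cases hr : H.Reachable v y ∧ y ≠ v
    · obtain ⟨hr, hy⟩ := hr
      obtain ⟨p, hp⟩ := hr.symm.exists_walk_length_eq_dist
      cases p with
      | nil => exact absurd rfl hy
      | @cons _ z _ h q =>
        refine ⟨z, fun _ _ => ⟨h, q.reachable.symm, ?_⟩⟩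
        simp only [Walk.length_cons] at hp
        have h1 := dist_le q
        rw [dist_comm] at h1 hp
        have h2 := dist_le (q.reachable.symm.some)
        obtain ⟨p', hp'⟩ := q.reachable.symm.exists_walk_length_eq_dist
        have h3 := dist_le (p'.concat h.symm)
        rw [Walk.length_concat] at h3
        omega
    · exact ⟨y, fun h1 h2 => absurd ⟨h1, h2⟩ hr⟩
  choose par hpar using key
  exact ⟨par, hpar⟩

lemma exists_anc {V : Type*} [DecidableEq V] (H : SimpleGraph V) (v : V) (par : V → V)
    (hpar : ∀ y, H.Reachable v y → y ≠ v →
      H.Adj y (par y) ∧ H.Reachable v (par y) ∧ H.dist v (par y) + 1 = H.dist v y) :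
    ∀ (d : ℕ) (y : V), H.Reachable v y → H.dist v y = d → ∃ P : Finset V, y ∈ P ∧ v ∈ P ∧
      P.card ≤ d + 1 ∧ (∀ z ∈ P, H.Reachable v z) ∧ ∀ z ∈ P, z ≠ v → par z ∈ P := by
  intro d
  induction d with
  | zero =>
    intro y hr hd
    have : v = y := by
      rcases dist_eq_zero_iff_eq_or_not_reachable.1 hd with h | h
      · exact h
      · exact absurd hr h
    subst this
    refine ⟨{v}, by simp, by simp, by simp, ?_, ?_⟩
    · intro z hz; simp at hz; rw [hz]
    · intro z hz hz'; simp at hz; exact absurd hz hz'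
  | succ d ih =>
    intro y hr hd
    have hy : y ≠ v := by rintro rfl; simp at hd
    obtain ⟨h1, h2, h3⟩ := hpar y hr hy
    obtain ⟨P, p1, p2, p3, p4, p5⟩ := ih (par y) h2 (by omega)
    refine ⟨insert y P, by simp, by simp [p2], ?_, ?_, ?_⟩
    · exact (Finset.card_insert_le _ _).trans (by omega)
    · intro z hz
      rcases Finset.mem_insert.1 hz with rfl | hz
      · exact hr
      · exact p4 z hz
    · intro z hz hzv
      rcases Finset.mem_insert.1 hz with rfl | hz
      · exact Finset.mem_insert_of_mem p1
      · exact Finset.mem_insert_of_mem (p5 z hz hzv)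

/-- Breadth-first search: an edge outside the search tree closes a cycle inside the union of the
ancestor sets of its two ends. -/
lemma small_core_of_extra {V : Type*} [DecidableEq V] (H : SimpleGraph V) (v : V) (par : V → V)
    (hpar : ∀ y, H.Reachable v y → y ≠ v →
      H.Adj y (par y) ∧ H.Reachable v (par y) ∧ H.dist v (par y) + 1 = H.dist v y)
    (y₁ y₂ : V) (h₁ : H.Reachable v y₁) (h₂ : H.Reachable v y₂) (hadj : H.Adj y₁ y₂)
    (hp₁ : y₁ ≠ v → par y₁ ≠ y₂) (hp₂ : y₂ ≠ v → par y₂ ≠ y₁) :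
    ∃ S : Finset V, Core H S ∧ S.card ≤ H.dist v y₁ + H.dist v y₂ + 2 := by
  obtain ⟨P, p1, p2, p3, p4, p5⟩ := exists_anc H v par hpar _ y₁ h₁ rfl
  obtain ⟨Q, q1, q2, q3, q4, q5⟩ := exists_anc H v par hpar _ y₂ h₂ rfl
  set S := P ∪ Q with hS
  have hSr : ∀ z ∈ S, H.Reachable v z := by
    intro z hz
    rcases Finset.mem_union.1 hz with h | h
    · exact p4 z h
    · exact q4 z h
  have hSp : ∀ z ∈ S, z ≠ v → par z ∈ S := by
    intro z hz hzv
    rcases Finset.mem_union.1 hz with h | h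
    · exact Finset.mem_union_left _ (p5 z h hzv)
    · exact Finset.mem_union_right _ (q5 z h hzv)
  have hSc : S.card ≤ H.dist v y₁ + H.dist v y₂ + 2 := by
    have := Finset.card_union_le P Q
    rw [← hS] at this
    omega
  have hvS : v ∈ S := Finset.mem_union_left _ p2
  set E1 := (S.erase v).image (fun z => s(z, par z)) with hE1
  have hE1c : E1.card = S.card - 1 := by
    rw [hE1, Finset.card_image_of_injOn, Finset.card_erase_of_mem hvS]
    intro a ha b hb hab
    simp only [Finset.coe_erase, Set.mem_sdiff, Finset.mem_coe, Set.mem_singleton_iff] at ha hb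
    simp only [Sym2.eq_iff] at hab
    rcases hab with ⟨h, -⟩ | ⟨h, h'⟩
    · exact h
    · have e1 := (hpar a (hSr a ha.1) ha.2).2.2
      have e2 := (hpar b (hSr b hb.1) hb.2).2.2
      rw [h'] at e1
      rw [← h] at e2
      omega
  have hnot : s(y₁, y₂) ∉ E1 := by
    intro h
    simp only [hE1, Finset.mem_image, Finset.mem_erase, Sym2.eq_iff] at h
    obtain ⟨z, ⟨hz, -⟩, ⟨h, h'⟩ | ⟨h, h'⟩⟩ := h
    · subst h; exact hp₁ hz h'
    · subst h; exact hp₂ hz h'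
  have hno : ¬ NoCore H S := by
    refine core_of_edges S.card S (insert s(y₁, y₂) E1) rfl ?_ ?_ ?_ ⟨v, hvS⟩
    · intro e he
      rcases Finset.mem_insert.1 he with rfl | he
      · exact hadj
      · simp only [hE1, Finset.mem_image, Finset.mem_erase] at he
        obtain ⟨z, ⟨hz, hzS⟩, rfl⟩ := he
        exact (hpar z (hSr z hzS) hz).1
    · intro e he x hx
      rcases Finset.mem_insert.1 he with rfl | he
      · rcases Sym2.mem_iff.1 hx with rfl | rfl
        · exact Finset.mem_union_left _ p1
        · exact Finset.mem_union_right _ q1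
      · simp only [hE1, Finset.mem_image, Finset.mem_erase] at he
        obtain ⟨z, ⟨hz, hzS⟩, rfl⟩ := he
        rcases Sym2.mem_iff.1 hx with rfl | rfl
        · exact hzS
        · exact hSp z hzS hz
    · rw [Finset.card_insert_of_notMem hnot, hE1c]; omega
  simp only [NoCore, not_forall, not_not] at hno
  obtain ⟨T, hT, hc⟩ := hno
  exact ⟨T, hc, (Finset.card_le_card hT).trans hSc⟩

/-- Minimum degree three forces a cycle of logarithmic length: below the length of a shortest
cycle the breadth-first layers double in size. -/
lemma small_core {V : Type*} [DecidableEq V] (G : SimpleGraph V) (W : Finset V) (i : ℕ)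
    (hW : W.card < 2 ^ i) (hne : W.Nonempty) (hdeg : ∀ x ∈ W, 3 ≤ (nb G W x).card) :
    ∃ S ⊆ W, Core G S ∧ S.card ≤ 2 * i + 2 := by
  classical
  by_contra! hcon
  obtain ⟨v, hv⟩ := hne
  let H : SimpleGraph V :=
    { Adj := fun a b => G.Adj a b ∧ a ∈ W ∧ b ∈ W
      symm := ⟨fun a b h => ⟨h.1.symm, h.2.2, h.2.1⟩⟩
      loopless := ⟨fun a h => G.loopless.irrefl a h.1⟩ }
  have hHW : ∀ S, Core H S → S ⊆ W ∧ Core G S := by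
    rintro S ⟨h1, h2⟩
    refine ⟨?_, h1, fun x hx => (h2 x hx).trans (Finset.card_le_card ?_)⟩
    · intro x hx
      obtain ⟨y, hy⟩ : (nb H S x).Nonempty := by
        rw [← Finset.card_pos]; have := h2 x hx; omega
      simp only [mem_nb] at hy
      exact hy.2.2.1
    · intro y hy
      simp only [mem_nb] at hy ⊢
      exact ⟨hy.1, hy.2.1⟩
  obtain ⟨par, hpar⟩ := exists_parent H v
  set D : ℕ → Finset V := fun j => W.filter (fun y => H.Reachable v y ∧ H.dist v y = j) with hD
  have hnoextra : ∀ y₁ y₂, H.Reachable v y₁ → H.Adj y₁ y₂ → H.dist v y₁ + H.dist v y₂ ≤ 2 * i →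
      (y₁ ≠ v → par y₁ ≠ y₂) → y₂ ≠ v ∧ par y₂ = y₁ := by
    intro y₁ y₂ hr hadj hd h1
    by_contra h2
    have hr2 : H.Reachable v y₂ := hr.trans hadj.reachable
    obtain ⟨S, hS, hSc⟩ := small_core_of_extra H v par hpar y₁ y₂ hr hr2 hadj h1
      (fun h h' => h2 ⟨h, h'⟩)
    obtain ⟨a, b⟩ := hHW S hS
    have := hcon S a b
    omega
  have hlayer : ∀ j ≤ i, 2 ^ j ≤ (D j).card := by
    intro j
    induction j with
    | zero =>
      intro _
      have : v ∈ D 0 := by simp [hD, hv]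
      simpa using Finset.card_pos.2 ⟨v, this⟩
    | succ j ih =>
      intro hj
      have ih' := ih (by omega)
      have hmaps : Set.MapsTo par (D (j+1) : Set V) (D j : Set V) := by
        intro z hz
        simp only [hD, Finset.coe_filter, Set.mem_ofPred_eq] at hz ⊢
        have hzv : z ≠ v := by rintro rfl; simp at hz
        obtain ⟨h1, h2, h3⟩ := hpar z hz.2.1 hzv
        exact ⟨h1.2.2, h2, by omega⟩
      rw [Finset.card_eq_sum_card_fiberwise hmaps]
      have : ∀ y ∈ D j, 2 ≤ ((D (j+1)).filter (fun z => par z = y)).card := by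
        intro y hy
        simp only [hD, Finset.mem_filter] at hy
        obtain ⟨hyW, hyr, hyd⟩ := hy
        have h3 := hdeg y hyW
        have hsub : (nb G W y).erase (par y) ⊆ (D (j+1)).filter (fun z => par z = y) := by
          intro z hz
          simp only [Finset.mem_erase, mem_nb] at hz
          obtain ⟨hz1, hz2, hz3⟩ := hz
          have hadj : H.Adj y z := ⟨hz3, hyW, hz2⟩
          have hzr : H.Reachable v z := hyr.trans hadj.reachable
          have hdz : H.dist v z ≤ j + 1 := by
            obtain ⟨p', hp'⟩ := hyr.exists_walk_length_eq_dist
            have h3 := dist_le (p'.concat hadj)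
            rw [Walk.length_concat] at h3
            omega
          obtain ⟨e1, e2⟩ := hnoextra y z hyr hadj (by omega) (fun _ h => hz1 h.symm)
          have e3 := (hpar z hzr e1).2.2
          rw [e2] at e3
          simp only [hD, Finset.mem_filter]
          exact ⟨⟨hz2, hzr, by omega⟩, e2⟩
        have := Finset.card_le_card hsub
        have h4 := Finset.pred_card_le_card_erase (s := nb G W y) (a := par y)
        omega
      have := Finset.sum_le_sum this
      simp only [Finset.sum_const, smul_eq_mul] at this
      rw [pow_succ]
      omega
  have h1 := hlayer i le_rfl
  have h2 : (D i).card ≤ W.card := Finset.card_le_card (Finset.filter_subset _ _)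
  omega

lemma sup_edge_adj' {V : Type*} {G : SimpleGraph V} {a b : V} (hab : a ≠ b) {y z : V} :
    (G ⊔ edge a b).Adj y z ↔ G.Adj y z ∨ (y = a ∧ z = b) ∨ (y = b ∧ z = a) := by
  rw [sup_adj, edge_adj]
  constructor
  · rintro (h | ⟨h, -⟩)
    · exact Or.inl h
    · right; tauto
  · rintro (h | ⟨rfl, rfl⟩ | ⟨rfl, rfl⟩)
    · exact Or.inl h
    · exact Or.inr ⟨by tauto, hab⟩
    · exact Or.inr ⟨by tauto, hab.symm⟩

/-- Undoing the suppression of a vertex `x` of degree two with neighbours `a`, `b`. -/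
lemma core_unsuppress {V : Type*} [DecidableEq V] {G : SimpleGraph V} {a b x : V} (hab : a ≠ b)
    (hxa : G.Adj x a) (hxb : G.Adj x b) {S : Finset V} (hxS : x ∉ S)
    (hS : Core (G ⊔ edge a b) S) :
    Core G (if a ∈ S ∧ b ∈ S then insert x S else S) := by
  split_ifs with h
  · refine ⟨⟨x, by simp⟩, ?_⟩
    intro y hy
    rcases Finset.mem_insert.1 hy with rfl | hyS
    · have : ({a, b} : Finset V) ⊆ nb G (insert y S) y := by
        intro z hz
        simp only [Finset.mem_insert, Finset.mem_singleton] at hz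
        simp only [mem_nb, Finset.mem_insert]
        rcases hz with rfl | rfl
        · exact ⟨Or.inr h.1, hxa⟩
        · exact ⟨Or.inr h.2, hxb⟩
      have h2 := Finset.card_le_card this
      rwa [Finset.card_pair hab] at h2
    · refine (hS.2 y hyS).trans ?_
      have hx_not : x ∉ nb G S y := fun h => hxS (mem_nb.1 h).1
      have hends : ∀ c, (nb (G ⊔ edge a b) S y ⊆ insert c (nb G S y)) → G.Adj x y →
          (nb (G ⊔ edge a b) S y).card ≤ (nb G (insert x S) y).card := by
        intro c hc hadj
        have h1 := Finset.card_le_card hc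
        have h2 := Finset.card_insert_le c (nb G S y)
        have h3 : insert x (nb G S y) ⊆ nb G (insert x S) y := by
          intro z hz
          rcases Finset.mem_insert.1 hz with rfl | hz
          · simp [hadj.symm]
          · exact nb_mono (Finset.subset_insert _ _) _ hz
        have h4 := Finset.card_le_card h3
        rw [Finset.card_insert_of_notMem hx_not] at h4
        omega
      by_cases hya : y = a
      · subst hya
        refine hends b ?_ hxa
        intro z hz
        simp only [mem_nb, sup_edge_adj' hab, Finset.mem_insert] at hz ⊢
        grind
      · by_cases hyb : y = b
        · subst hyb
          refine hends a ?_ hxb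
          intro z hz
          simp only [mem_nb, sup_edge_adj' hab, Finset.mem_insert] at hz ⊢
          grind
        · apply Finset.card_le_card
          intro z hz
          simp only [mem_nb, sup_edge_adj' hab, Finset.mem_insert] at hz ⊢
          grind
  · refine ⟨hS.1, fun y hy => (hS.2 y hy).trans (Finset.card_le_card ?_)⟩
    intro z hz
    simp only [mem_nb, sup_edge_adj' hab] at hz ⊢
    grind

/-- Suppressing a vertex `x` of degree two keeps every core, up to the removal of `x`. -/
lemma core_suppress {V : Type*} [DecidableEq V] {G : SimpleGraph V} {a b x : V} (hab : a ≠ b)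
    (hnab : ¬ G.Adj a b) {S : Finset V} (hx : nb G S x ⊆ {a, b})
    (hS : Core G S) : Core (G ⊔ edge a b) (S.erase x) := by
  by_cases hxS : x ∈ S
  · have h2 := hS.2 x hxS
    have heq : nb G S x = {a, b} := by
      apply Finset.eq_of_subset_of_card_le hx
      rw [Finset.card_pair hab]; exact h2
    have ha : a ∈ nb G S x := by rw [heq]; simp
    have hb : b ∈ nb G S x := by rw [heq]; simp
    simp only [mem_nb] at ha hb
    refine ⟨⟨a, by simp [ha.1, ha.2.ne']⟩, ?_⟩
    intro y hy
    obtain ⟨hyx, hyS⟩ := Finset.mem_erase.1 hy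
    refine (hS.2 y hyS).trans ?_
    have hsub : nb G S y ⊆ insert x (nb G (S.erase x) y) := by
      intro z hz
      simp only [mem_nb, Finset.mem_insert, Finset.mem_erase] at hz ⊢
      tauto
    have hends : ∀ c, c ∈ S.erase x → ¬ G.Adj y c → (G ⊔ edge a b).Adj y c →
        (nb G S y).card ≤ (nb (G ⊔ edge a b) (S.erase x) y).card := by
      intro c hcS hc hc'
      have h1 := Finset.card_le_card hsub
      have h2 := Finset.card_insert_le x (nb G (S.erase x) y)
      have h3 : insert c (nb G (S.erase x) y) ⊆ nb (G ⊔ edge a b) (S.erase x) y := by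
        intro z hz
        rcases Finset.mem_insert.1 hz with rfl | hz
        · simp only [mem_nb]; exact ⟨hcS, hc'⟩
        · simp only [mem_nb] at hz ⊢; exact ⟨hz.1, Or.inl hz.2⟩
      have h4 := Finset.card_le_card h3
      rw [Finset.card_insert_of_notMem (by simp [hc])] at h4
      omega
    by_cases hya : y = a
    · subst hya
      exact hends b (by simp [hb.1, hb.2.ne']) hnab ((sup_edge_adj' hab).2 (by simp))
    · by_cases hyb : y = b
      · subst hyb
        exact hends a (by simp [ha.1, ha.2.ne']) (fun h => hnab h.symm)
          ((sup_edge_adj' hab).2 (by simp))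
      · apply Finset.card_le_card
        intro z hz
        have hzx : z ≠ x := by
          rintro rfl
          have : y ∈ nb G S z := by
            simp only [mem_nb] at hz ⊢; exact ⟨hyS, hz.2.symm⟩
          rw [heq] at this
          simp [hya, hyb] at this
        simp only [mem_nb, Finset.mem_erase] at hz ⊢
        exact ⟨⟨hzx, hz.1⟩, Or.inl hz.2⟩
  · rw [Finset.erase_eq_of_notMem hxS]
    refine ⟨hS.1, fun y hy => (hS.2 y hy).trans (Finset.card_le_card ?_)⟩
    intro z hz
    simp only [mem_nb] at hz ⊢
    exact ⟨hz.1, Or.inl hz.2⟩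

/-- A graph on fewer than `2 ^ i` vertices without `j` disjoint cycles has a blocker of size at
most `(2 * i + 2) * j`. Vertices of degree at most two are deleted or suppressed; otherwise a
short cycle is removed. -/
lemma exists_small_blocker {V : Type*} [DecidableEq V] (i : ℕ) (hi : 1 ≤ i) :
    ∀ (N : ℕ) (W : Finset V) (G : SimpleGraph V) (j : ℕ), W.card = N → N < 2 ^ i →
    Packs G W j ∨ ∃ X ⊆ W, X.card ≤ (2 * i + 2) * j ∧ NoCore G (W \ X) := by
  intro N
  induction N using Nat.strong_induction_on with
  | _ N ih =>
  intro W G j hWN hNi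
  rcases j with _ | j
  · left; exact ⟨fun _ => ∅, fun i => i.elim0, fun i => i.elim0, fun i => i.elim0⟩
  by_cases hno : NoCore G W
  · right; exact ⟨∅, by simp, by simp, by simpa using hno⟩
  by_cases hsm : ∃ S ⊆ W, Core G S ∧ S.card ≤ 2 * i + 2
  · obtain ⟨S, hSW, hS, hSc⟩ := hsm
    have hlt : (W \ S).card < N := by
      rw [Finset.card_sdiff_of_subset hSW]
      have := hS.1.card_pos
      have := Finset.card_le_card hSW
      omega
    rcases ih _ hlt (W \ S) G j rfl (by omega) with h | ⟨X, hX, hXc, hXn⟩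
    · left
      obtain ⟨C, hC, hCW, hCd⟩ := h
      refine ⟨Fin.cons S C, ?_, ?_, ?_⟩
      · intro t; refine Fin.cases ?_ ?_ t
        · exact hS
        · exact hC
      · intro t; refine Fin.cases ?_ ?_ t
        · exact hSW
        · exact fun t => (hCW t).trans Finset.sdiff_subset
      · have hd : ∀ t, Disjoint S (C t) := fun t =>
          Finset.disjoint_of_subset_right (hCW t) Finset.disjoint_sdiff
        intro t; refine Fin.cases ?_ ?_ t
        · intro t'; refine Fin.cases ?_ ?_ t'
          · intro h; exact absurd rfl h
          · intro t' _; exact hd t'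
        · intro t1 t'; refine Fin.cases ?_ ?_ t'
          · intro _; exact (hd t1).symm
          · intro t' h
            exact hCd t1 t' (fun h' => h (by rw [h']))
    · right
      refine ⟨S ∪ X, ?_, ?_, ?_⟩
      · exact Finset.union_subset hSW (hX.trans Finset.sdiff_subset)
      · refine (Finset.card_union_le _ _).trans ?_
        rw [mul_add]; omega
      · have h := hXn
        rw [sdiff_sdiff_left] at h
        exact h
  have hWne : W.Nonempty := by
    by_contra h
    rw [Finset.not_nonempty_iff_eq_empty] at h
    subst h
    apply hno
    intro S hS hc
    exact absurd (Finset.subset_empty.1 hS) hc.1.ne_empty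
  have hlow : ∃ x ∈ W, (nb G W x).card ≤ 2 := by
    by_contra! h
    exact hsm (small_core G W i (by omega) hWne h)
  obtain ⟨x, hx, hdx⟩ := hlow
  have hlt : (W.erase x).card < N := by
    rw [Finset.card_erase_of_mem hx]
    have := hWne.card_pos
    omega
  by_cases hd1 : (nb G W x).card ≤ 1
  · rcases ih _ hlt (W.erase x) G (j + 1) rfl (by omega) with h | ⟨X, hX, hXc, hXn⟩
    · left
      obtain ⟨C, hC, hCW, hCd⟩ := h
      exact ⟨C, hC, fun t => (hCW t).trans (Finset.erase_subset _ _), hCd⟩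
    · right
      refine ⟨X, hX.trans (Finset.erase_subset _ _), hXc, ?_⟩
      intro S hS hc
      refine hXn S ?_ hc
      intro y hy
      have hyW := Finset.mem_sdiff.1 (hS hy)
      refine Finset.mem_sdiff.2 ⟨Finset.mem_erase.2 ⟨?_, hyW.1⟩, hyW.2⟩
      rintro rfl
      have h1 := hc.2 y hy
      have h2 := Finset.card_le_card (nb_mono (G := G) (hS.trans Finset.sdiff_subset) y)
      omega
  · obtain ⟨a, b, hab, hnb⟩ := Finset.card_eq_two.1 (by omega : (nb G W x).card = 2)
    have ha : a ∈ nb G W x := by rw [hnb]; simp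
    have hb : b ∈ nb G W x := by rw [hnb]; simp
    simp only [mem_nb] at ha hb
    have hnab : ¬ G.Adj a b := by
      intro hadj
      apply hsm
      refine ⟨{x, a, b}, ?_, ⟨⟨x, by simp⟩, ?_⟩, ?_⟩
      · intro y hy
        simp only [Finset.mem_insert, Finset.mem_singleton] at hy
        rcases hy with rfl | rfl | rfl
        · exact hx
        · exact ha.1
        · exact hb.1
      · have two : ∀ y c d, c ≠ d → c ∈ nb G {x, a, b} y → d ∈ nb G {x, a, b} y →
            2 ≤ (nb G {x, a, b} y).card := by
          intro y c d hcd hc hd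
          exact Finset.one_lt_card.2 ⟨c, hc, d, hd, hcd⟩
        intro y hy
        simp only [Finset.mem_insert, Finset.mem_singleton] at hy
        rcases hy with rfl | rfl | rfl
        · exact two _ a b hab (by simp [ha.2]) (by simp [hb.2])
        · exact two _ x b hb.2.ne (by simp [ha.2.symm]) (by simp [hadj])
        · exact two _ x a ha.2.ne (by simp [hb.2.symm]) (by simp [hadj.symm])
      · exact Finset.card_le_three.trans (by omega)
    rcases ih _ hlt (W.erase x) (G ⊔ edge a b) (j + 1) rfl (by omega) with h | ⟨X, hX, hXc, hXn⟩
    · left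
      obtain ⟨C, hC, hCW, hCd⟩ := h
      have hxC : ∀ t, x ∉ C t := fun t h => Finset.notMem_erase x W (hCW t h)
      refine ⟨fun t => if a ∈ C t ∧ b ∈ C t then insert x (C t) else C t,
        fun t => core_unsuppress hab ha.2 hb.2 (hxC t) (hC t), ?_, ?_⟩
      · intro t
        have := (hCW t).trans (Finset.erase_subset x W)
        dsimp only
        split_ifs
        · exact Finset.insert_subset hx this
        · exact this
      · intro t t' htt
        have hdis := hCd t t' htt
        rw [Finset.disjoint_left] at hdis ⊢
        have h1 := hxC t
        have h2 := hxC t'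
        intro y hy hy'
        dsimp only at hy hy'
        split_ifs at hy hy' <;> grind
    · right
      refine ⟨X, hX.trans (Finset.erase_subset _ _), hXc, ?_⟩
      intro S hS hc
      refine hXn (S.erase x) ?_ (core_suppress hab hnab ?_ hc)
      · intro y hy
        obtain ⟨h1, h2⟩ := Finset.mem_erase.1 hy
        have hyW := Finset.mem_sdiff.1 (hS h2)
        exact Finset.mem_sdiff.2 ⟨Finset.mem_erase.2 ⟨h1, hyW.1⟩, hyW.2⟩
      · rw [← hnb]
        exact nb_mono (hS.trans Finset.sdiff_subset) x

/-! ### Encoding forests by parent functions -/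

/-- `p` is an acyclic parent function for the forest that `G` induces on `W`: the edges inside `W`
are exactly the pairs consisting of a vertex and its parent, and the rank `rk` increases from a
vertex to its parent. -/
structure IsPar {V : Type*} (G : SimpleGraph V) (W : Finset V) (p : V → Option V) (rk : V → ℕ) :
    Prop where
  adj : ∀ a ∈ W, ∀ b ∈ W, (G.Adj a b ↔ p a = some b ∨ p b = some a)
  mem : ∀ x y, p x = some y → x ∈ W ∧ y ∈ W ∧ rk x < rk y

/-- Deleting leaves one by one, each vertex receives as parent its last remaining neighbour. -/
lemma NoCore.exists_par {V : Type*} [DecidableEq V] {G : SimpleGraph V} :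
    ∀ (N : ℕ) (W : Finset V), W.card = N → NoCore G W → ∃ p rk, IsPar G W p rk := by
  intro N
  induction N with
  | zero =>
    intro W hW _
    rw [Finset.card_eq_zero] at hW
    subst hW
    exact ⟨fun _ => none, fun _ => 0, by simp, by simp⟩
  | succ N ih =>
    intro W hW hno
    have hne : W.Nonempty := Finset.card_pos.1 (by omega)
    obtain ⟨x, hx, hd⟩ := hno.exists_leaf hne
    obtain ⟨p, rk, hp⟩ := ih (W.erase x) (by rw [Finset.card_erase_of_mem hx]; omega)
      (hno.mono (Finset.erase_subset _ _))
    have hpx : p x = none := by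
      by_contra h
      obtain ⟨y, hy⟩ := Option.ne_none_iff_exists'.1 h
      simpa using (hp.mem x y hy).1
    have hpy : ∀ y, p y ≠ some x := by
      intro y h
      simpa using (hp.mem y x h).2.1
    rcases (nb G W x).eq_empty_or_nonempty with h0 | ⟨y, hy⟩
    · have hnx : ∀ b ∈ W, ¬ G.Adj x b := by
        intro b hb hab
        have : b ∈ nb G W x := by simp [hb, hab]
        simp [h0] at this
      refine ⟨p, rk, ?_, fun a b h => ?_⟩
      · intro a ha b hb
        by_cases hax : a = x
        · subst hax
          simp [hnx b hb, hpx, hpy b]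
        · by_cases hbx : b = x
          · subst hbx
            have : ¬ G.Adj a b := fun h => hnx a ha h.symm
            simp [this, hpx, hpy a]
          · exact hp.adj a (by simp [hax, ha]) b (by simp [hbx, hb])
      · have := hp.mem a b h
        simp only [Finset.mem_erase] at this
        exact ⟨this.1.2, this.2.1.2, this.2.2⟩
    · have hyW : y ∈ W := (mem_nb.1 hy).1
      have hxy : G.Adj x y := (mem_nb.1 hy).2
      have huniq : ∀ b ∈ W, G.Adj x b → b = y := by
        intro b hb hab
        exact Finset.card_le_one.1 hd b (by simp [hb, hab]) y hy
      refine ⟨Function.update p x (some y), fun z => if z = x then 0 else rk z + 1, ?_, ?_⟩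
      · intro a ha b hb
        by_cases hax : a = x
        · subst hax
          by_cases hba : b = a
          · subst hba
            simp only [SimpleGraph.irrefl, Function.update_self, Option.some.injEq, or_self,
              false_iff]
            exact hxy.ne'
          · rw [Function.update_self, Function.update_of_ne hba]
            simp only [Option.some.injEq, hpy b, or_false]
            exact ⟨fun h => (huniq b hb h).symm, fun h => h ▸ hxy⟩
        · by_cases hbx : b = x
          · subst hbx
            rw [Function.update_self, Function.update_of_ne hax]
            simp only [Option.some.injEq, hpy a, false_or]
            exact ⟨fun h => (huniq a ha h.symm).symm, fun h => h ▸ hxy.symm⟩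
          · rw [Function.update_of_ne hax, Function.update_of_ne hbx]
            exact hp.adj a (by simp [hax, ha]) b (by simp [hbx, hb])
      · intro a b h
        by_cases hax : a = x
        · subst hax
          rw [Function.update_self, Option.some.injEq] at h
          subst h
          simp [hx, hyW, hxy.ne']
        · rw [Function.update_of_ne hax] at h
          have := hp.mem a b h
          simp only [Finset.mem_erase] at this
          simp [hax, this.2.1.1, this.1.2, this.2.1.2, this.2.2]

open Classical in
/-- The vertices of `Y` whose parent is missing or lies outside `Y`: the roots of the components
of the forest induced on `Y`. -/
noncomputable def roots {V : Type*} (p : V → Option V) (Y : Finset V) : Finset V :=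
  Y.filter (fun x => ∀ y ∈ Y, p x ≠ some y)

@[simp] lemma mem_roots {V : Type*} {p : V → Option V} {Y : Finset V} {x : V} :
    x ∈ roots p Y ↔ x ∈ Y ∧ ∀ y ∈ Y, p x ≠ some y := by
  classical
  simp [roots]

lemma IsPar.forest_edges {V : Type*} [DecidableEq V] {G : SimpleGraph V} {W : Finset V}
    {p : V → Option V} {rk : V → ℕ} (hp : IsPar G W p rk) (Y : Finset V) :
    ∃ E : Finset (Sym2 V), (∀ e ∈ E, e ∈ G.edgeSet) ∧ (∀ e ∈ E, ∀ x ∈ e, x ∈ Y) ∧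
      E.card + (roots p Y).card = Y.card := by
  classical
  have hroot : ∀ x ∈ Y \ roots p Y, ∃ y ∈ Y, p x = some y := by
    intro x hx
    simp only [Finset.mem_sdiff, mem_roots, not_and, not_forall, not_not] at hx
    obtain ⟨y, hy, h⟩ := hx.2 hx.1
    exact ⟨y, hy, h⟩
  choose! q hq hpq using hroot
  refine ⟨(Y \ roots p Y).image (fun x => s(x, q x)), ?_, ?_, ?_⟩
  · intro e he
    obtain ⟨x, hx, rfl⟩ := Finset.mem_image.1 he
    have := hp.mem x _ (hpq x hx)
    exact (hp.adj x this.1 _ this.2.1).2 (Or.inl (hpq x hx))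
  · intro e he z hz
    obtain ⟨x, hx, rfl⟩ := Finset.mem_image.1 he
    rcases Sym2.mem_iff.1 hz with rfl | rfl
    · exact (Finset.mem_sdiff.1 hx).1
    · exact hq x hx
  · rw [Finset.card_image_of_injOn]
    · have hs : roots p Y ⊆ Y := fun x hx => (mem_roots.1 hx).1
      exact Finset.card_sdiff_add_card_eq_card hs
    · intro x hx y hy hxy
      simp only [Sym2.eq_iff] at hxy
      rcases hxy with h | h
      · exact h.1
      · have h1 := (hp.mem x _ (hpq x hx)).2.2
        have h2 := (hp.mem y _ (hpq y hy)).2.2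
        rw [h.2] at h1
        rw [← h.1] at h2
        omega

/-- Edge counting: a forest together with a set `U` joined to it by at least
`|U| + #components` edges contains a cycle. -/
lemma IsPar.core_of_cross {V : Type*} [DecidableEq V] {G : SimpleGraph V} {W : Finset V}
    {p : V → Option V} {rk : V → ℕ} (hp : IsPar G W p rk) {Y U : Finset V}
    (hUY : Disjoint U Y) (T : Finset (V × V)) (hT : ∀ t ∈ T, t.1 ∈ U ∧ t.2 ∈ Y ∧ G.Adj t.1 t.2)
    (hcard : U.card + (roots p Y).card ≤ T.card) (hne : U.Nonempty) :
    ¬ NoCore G (U ∪ Y) := by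
  classical
  obtain ⟨E, hE1, hE2, hE3⟩ := hp.forest_edges Y
  have hinj : (T.image (fun t => s(t.1, t.2))).card = T.card := by
    rw [Finset.card_image_of_injOn]
    intro a ha b hb hab
    rcases Sym2.eq_iff.1 hab with h | h
    · exact Prod.ext h.1 h.2
    · exact absurd (hT b hb).2.1 (h.1 ▸ Finset.disjoint_left.1 hUY (hT a ha).1)
  have hdis : Disjoint E (T.image (fun t => s(t.1, t.2))) := by
    rw [Finset.disjoint_left]
    intro e he he'
    obtain ⟨t, ht, rfl⟩ := Finset.mem_image.1 he'
    exact Finset.disjoint_left.1 hUY (hT t ht).1 (hE2 _ he t.1 (by simp))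
  refine core_of_edges _ _ (E ∪ T.image (fun t => s(t.1, t.2))) rfl ?_ ?_ ?_ ?_
  · intro e he
    rcases Finset.mem_union.1 he with h | h
    · exact hE1 e h
    · obtain ⟨t, ht, rfl⟩ := Finset.mem_image.1 h
      exact (hT t ht).2.2
  · intro e he x hx
    rcases Finset.mem_union.1 he with h | h
    · exact Finset.mem_union_right _ (hE2 e h x hx)
    · obtain ⟨t, ht, rfl⟩ := Finset.mem_image.1 h
      rcases Sym2.mem_iff.1 hx with rfl | rfl
      · exact Finset.mem_union_left _ (hT t ht).1
      · exact Finset.mem_union_right _ (hT t ht).2.1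
  · rw [Finset.card_union_of_disjoint hUY, Finset.card_union_of_disjoint hdis, hinj]
    omega
  · exact hne.mono Finset.subset_union_left

lemma IsPar.nb_le_roots {V : Type*} [DecidableEq V] {G : SimpleGraph V} {W : Finset V}
    {p : V → Option V} {rk : V → ℕ} (hp : IsPar G W p rk) {Y : Finset V} {u : V}
    (hu : u ∉ Y) (hno : NoCore G (insert u Y)) : (nb G Y u).card ≤ (roots p Y).card := by
  classical
  by_contra! hlt
  refine hp.core_of_cross (U := {u}) (by simpa using hu) ((nb G Y u).image (fun y => (u, y)))
    ?_ ?_ (by simp) (by simpa using hno)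
  · intro t ht
    obtain ⟨y, hy, rfl⟩ := Finset.mem_image.1 ht
    simpa using hy
  · rw [Finset.card_image_of_injective _ (fun a b h => by simpa using h)]
    simp; omega

/-- The map sending a vertex to the root of its component in the forest induced on `Y`. -/
lemma IsPar.exists_root_map {V : Type*} [DecidableEq V] {G : SimpleGraph V} {W : Finset V}
    {p : V → Option V} {rk : V → ℕ} (hp : IsPar G W p rk) :
    ∀ (N : ℕ) (Y : Finset V), Y.card = N → ∃ ρ : V → V,
      (∀ x ∈ Y, ρ x ∈ roots p Y) ∧ (∀ x ∈ roots p Y, ρ x = x) ∧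
      ∀ x ∈ Y, ∀ y ∈ Y, p x = some y → ρ x = ρ y := by
  intro N
  induction N with
  | zero =>
    intro Y hY
    rw [Finset.card_eq_zero] at hY
    subst hY
    exact ⟨id, by simp, by simp, by simp⟩
  | succ N ih =>
    intro Y hY
    have hne : Y.Nonempty := Finset.card_pos.1 (by omega)
    obtain ⟨x, hx, hmin⟩ := Y.exists_min_image rk hne
    obtain ⟨ρ, h1, h2, h3⟩ := ih (Y.erase x) (by rw [Finset.card_erase_of_mem hx]; omega)
    have hpx : ∀ y ∈ Y, p y ≠ some x := by
      intro y hy h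
      have := (hp.mem y x h).2.2
      have := hmin y hy
      omega
    have hroots : ∀ y, y ≠ x → (y ∈ roots p Y ↔ y ∈ roots p (Y.erase x)) := by
      intro y hyx
      simp only [mem_roots, Finset.mem_erase, ne_eq, hyx, not_false_iff, true_and]
      refine and_congr_right fun hy => ⟨fun h z hz => h z hz.2, fun h z hz => ?_⟩
      by_cases hzx : z = x
      · subst hzx; exact hpx y hy
      · exact h z ⟨hzx, hz⟩
    by_cases hxr : x ∈ roots p Y
    · refine ⟨Function.update ρ x x, ?_, ?_, ?_⟩
      · intro y hy
        by_cases hyx : y = x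
        · subst hyx; simpa using hxr
        · rw [Function.update_of_ne hyx]
          have := h1 y (by simp [hyx, hy])
          have hne : ρ y ≠ x := by
            intro h; rw [h] at this; simp at this
          exact (hroots _ hne).2 this
      · intro y hy
        by_cases hyx : y = x
        · subst hyx; simp
        · rw [Function.update_of_ne hyx]
          exact h2 y ((hroots y hyx).1 hy)
      · intro a ha b hb hab
        have hax : a ≠ x := by
          rintro rfl; exact (mem_roots.1 hxr).2 b hb hab
        have hbx : b ≠ x := by
          rintro rfl; exact hpx a ha hab
        rw [Function.update_of_ne hax, Function.update_of_ne hbx]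
        exact h3 a (by simp [hax, ha]) b (by simp [hbx, hb]) hab
    · have : ∃ y ∈ Y, p x = some y := by
        simp only [mem_roots, not_and, not_forall, not_not] at hxr
        obtain ⟨y, hy, h⟩ := hxr hx
        exact ⟨y, hy, h⟩
      obtain ⟨z, hz, hxz⟩ := this
      have hzx : z ≠ x := by
        rintro rfl; exact hpx z hz hxz
      refine ⟨Function.update ρ x (ρ z), ?_, ?_, ?_⟩
      · have hall : ∀ y ∈ Y, y ≠ x → ρ y ∈ roots p Y := by
          intro y hy hyx
          have := h1 y (by simp [hyx, hy])
          have hne : ρ y ≠ x := by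
            intro h; rw [h] at this; simp at this
          exact (hroots _ hne).2 this
        intro y hy
        by_cases hyx : y = x
        · subst hyx; simpa using hall z hz hzx
        · rw [Function.update_of_ne hyx]
          exact hall y hy hyx
      · intro y hy
        have hyx : y ≠ x := by rintro rfl; exact hxr hy
        rw [Function.update_of_ne hyx]
        exact h2 y ((hroots y hyx).1 hy)
      · intro a ha b hb hab
        have hbx : b ≠ x := by
          rintro rfl; exact hpx a ha hab
        rw [Function.update_of_ne hbx]
        by_cases hax : a = x
        · subst hax
          rw [Function.update_self]
          rw [hxz] at hab
          simp at hab
          rw [hab]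
        · rw [Function.update_of_ne hax]
          exact h3 a (by simp [hax, ha]) b (by simp [hbx, hb]) hab

/-! ### Cycles through one vertex attached to a forest -/

/-- A petal with respect to `N` is a set `P` that becomes a core once a new vertex, adjacent to
all vertices of `N`, is added. -/
def Petal {V : Type*} [DecidableEq V] (G : SimpleGraph V) (N P : Finset V) : Prop :=
  2 ≤ (P ∩ N).card ∧ ∀ x ∈ P, 2 ≤ (nb G P x).card + (if x ∈ N then 1 else 0)

lemma Petal.core {V : Type*} [DecidableEq V] {G : SimpleGraph V} {W P : Finset V} {u : V}
    (hu : u ∉ P) (h : Petal G (nb G W u) P) : Core G (insert u P) := by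
  refine ⟨by simp, fun x hx => ?_⟩
  rw [Finset.mem_insert] at hx
  rcases hx with rfl | hx
  · refine h.1.trans (Finset.card_le_card ?_)
    intro y hy
    simp only [Finset.mem_inter, mem_nb, Finset.mem_insert] at hy ⊢
    exact ⟨Or.inr hy.1, hy.2.2⟩
  · refine (h.2 x hx).trans ?_
    split_ifs with hxN
    · have : insert u (nb G P x) ⊆ nb G (insert u P) x := by
        intro y hy
        simp only [Finset.mem_insert, mem_nb] at hy hxN ⊢
        rcases hy with rfl | hy
        · exact ⟨Or.inl rfl, hxN.2.symm⟩
        · exact ⟨Or.inr hy.1, hy.2⟩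
      have h2 := Finset.card_le_card this
      rwa [Finset.card_insert_of_notMem (by simp [hu])] at h2
    · exact Finset.card_le_card (nb_mono (Finset.subset_insert _ _) x)

lemma Core.petal {V : Type*} [DecidableEq V] {G : SimpleGraph V} {W S : Finset V} {u : V}
    (hS : Core G S) (huS : u ∈ S) (hSW : S ⊆ insert u W) :
    Petal G (nb G W u) (S.erase u) := by
  refine ⟨(hS.2 u huS).trans (Finset.card_le_card ?_), fun x hx => ?_⟩
  · intro y hy
    simp only [mem_nb, Finset.mem_inter, Finset.mem_erase] at hy ⊢
    have hyu : y ≠ u := hy.2.ne'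
    have := hSW hy.1
    simp only [Finset.mem_insert, hyu, false_or] at this
    exact ⟨⟨hyu, hy.1⟩, this, hy.2⟩
  · have hxS := Finset.mem_of_mem_erase hx
    have hxu := Finset.ne_of_mem_erase hx
    have hxW : x ∈ W := by simpa [hxu] using hSW hxS
    refine (hS.2 x hxS).trans ?_
    split_ifs with hxN
    · have : nb G S x ⊆ insert u (nb G (S.erase u) x) := by
        intro y hy
        simp only [Finset.mem_insert, mem_nb, Finset.mem_erase] at hy ⊢
        tauto
      exact (Finset.card_le_card this).trans (Finset.card_insert_le _ _)
    · apply Finset.card_le_card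
      intro y hy
      simp only [mem_nb, Finset.mem_erase] at hy hxN ⊢
      refine ⟨⟨?_, hy.1⟩, hy.2⟩
      rintro rfl
      exact hxN ⟨hxW, hy.2.symm⟩

/-- Either there are `m` disjoint petals, or `m` vertices meet all petals. The induction deletes a
leaf `x` of the forest: it lies in no petal, or it spans a petal with its neighbour `y`, or its
attachment to the new vertex is transferred to `y`. -/
lemma flower {V : Type*} [DecidableEq V] (G : SimpleGraph V) :
    ∀ (k : ℕ) (W N : Finset V) (m : ℕ), W.card = k → NoCore G W →
      (∃ P : Fin m → Finset V, (∀ i, Petal G N (P i)) ∧ (∀ i, P i ⊆ W) ∧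
        ∀ i j, i ≠ j → Disjoint (P i) (P j)) ∨
      ∃ X ⊆ W, X.card ≤ m ∧ ∀ P ⊆ W \ X, ¬ Petal G N P := by
  intro k
  induction k using Nat.strong_induction_on with
  | _ k ih =>
  intro W N m hW hno
  rcases m with _ | m
  · left; exact ⟨fun _ => ∅, fun i => i.elim0, fun i => i.elim0, fun i => i.elim0⟩
  rcases W.eq_empty_or_nonempty with rfl | hne
  · right
    refine ⟨∅, by simp, by simp, ?_⟩
    intro P hP h
    have : P = ∅ := by simpa using hP
    subst this
    simpa using h.1
  obtain ⟨x, hx, hd⟩ := hno.exists_leaf hne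
  have hltx : (W.erase x).card < k := by
    rw [Finset.card_erase_of_mem hx]
    have := hne.card_pos
    omega
  have hnox := hno.mono (Finset.erase_subset x W)
  by_cases hout : ∀ P ⊆ W, Petal G N P → x ∉ P
  · rcases ih _ hltx (W.erase x) N (m + 1) rfl hnox with ⟨P, h1, h2, h3⟩ | ⟨X, h1, h2, h3⟩
    · exact Or.inl ⟨P, h1, fun i => (h2 i).trans (Finset.erase_subset _ _), h3⟩
    · right
      refine ⟨X, h1.trans (Finset.erase_subset _ _), h2, fun P hP h => h3 P ?_ h⟩
      intro z hz
      have hz' := Finset.mem_sdiff.1 (hP hz)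
      have hzx : z ≠ x := by
        rintro rfl
        exact hout P (hP.trans Finset.sdiff_subset) h hz
      simp [hzx, hz'.1, hz'.2]
  push Not at hout
  obtain ⟨P₀, hP₀W, hP₀, hxP₀⟩ := hout
  have hnbP : ∀ P ⊆ W, (nb G P x).card ≤ 1 := fun P hP =>
    (Finset.card_le_card (nb_mono hP x)).trans hd
  have hxN : x ∈ N := by
    by_contra h
    have h1 := hP₀.2 x hxP₀
    have h2 := hnbP P₀ hP₀W
    simp only [h, if_false] at h1
    omega
  have hy : ∃ y, y ∈ nb G W x := by
    have h1 := hP₀.2 x hxP₀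
    simp only [hxN, if_true] at h1
    have : 0 < (nb G P₀ x).card := by omega
    obtain ⟨y, hy⟩ := Finset.card_pos.1 this
    exact ⟨y, nb_mono hP₀W x hy⟩
  obtain ⟨y, hy⟩ := hy
  have hyW : y ∈ W := (mem_nb.1 hy).1
  have hxy : G.Adj x y := (mem_nb.1 hy).2
  have hyx : y ≠ x := hxy.ne'
  have huniq : ∀ b ∈ W, G.Adj x b → b = y := fun b hb hab =>
    Finset.card_le_one.1 hd b (by simp [hb, hab]) y hy
  -- A petal through `x` also contains the neighbour `y`.
  have hthru : ∀ P ⊆ W, Petal G N P → x ∈ P → y ∈ P := by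
    intro P hP h hxP
    have h1 := h.2 x hxP
    simp only [hxN, if_true] at h1
    have : 0 < (nb G P x).card := by omega
    obtain ⟨z, hz⟩ := Finset.card_pos.1 this
    rw [mem_nb] at hz
    rw [← huniq z (hP hz.1) hz.2]
    exact hz.1
  by_cases hyN : y ∈ N
  · have hlt : (W \ {x, y}).card < k := by
      rw [← hW]
      apply Finset.card_lt_card
      refine ⟨Finset.sdiff_subset, fun h => ?_⟩
      have := h hx
      simp at this
    rcases ih _ hlt (W \ {x, y}) N m rfl (hno.mono Finset.sdiff_subset) with
      ⟨P, h1, h2, h3⟩ | ⟨X, h1, h2, h3⟩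
    · left
      have hdis : ∀ i, Disjoint {x, y} (P i) := fun i =>
        Finset.disjoint_of_subset_right (h2 i) Finset.disjoint_sdiff
      refine ⟨Fin.cons {x, y} P, ?_, ?_, ?_⟩
      · intro t; refine Fin.cases ?_ ?_ t
        · refine ⟨?_, ?_⟩
          · rw [Fin.cons_zero, Finset.inter_eq_left.2, Finset.card_pair hyx.symm]
            intro z hz
            rcases Finset.mem_insert.1 hz with rfl | hz
            · exact hxN
            · rwa [Finset.mem_singleton.1 hz]
          · intro z hz
            rw [Fin.cons_zero] at hz ⊢
            have hzN : z ∈ N := by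
              rcases Finset.mem_insert.1 hz with rfl | hz
              · exact hxN
              · rwa [Finset.mem_singleton.1 hz]
            have hpos : 0 < (nb G {x, y} z).card := by
              rw [Finset.card_pos]
              rcases Finset.mem_insert.1 hz with rfl | hz
              · exact ⟨y, by simp [hxy]⟩
              · rw [Finset.mem_singleton.1 hz]; exact ⟨x, by simp [hxy.symm]⟩
            rw [if_pos hzN]; omega
        · exact h1
      · intro t; refine Fin.cases ?_ ?_ t
        · intro z hz
          rw [Fin.cons_zero] at hz
          rcases Finset.mem_insert.1 hz with rfl | hz
          · exact hx
          · rwa [Finset.mem_singleton.1 hz]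
        · exact fun t => (h2 t).trans Finset.sdiff_subset
      · intro t; refine Fin.cases ?_ ?_ t
        · intro t'; refine Fin.cases ?_ ?_ t'
          · intro h; exact absurd rfl h
          · intro t' _; exact hdis t'
        · intro t1 t'; refine Fin.cases ?_ ?_ t'
          · intro _; exact (hdis t1).symm
          · intro t' h
            exact h3 t1 t' (fun h' => h (by rw [h']))
    · right
      refine ⟨insert y X, ?_, ?_, ?_⟩
      · intro z hz
        rcases Finset.mem_insert.1 hz with rfl | hz
        · exact hyW
        · exact Finset.sdiff_subset (h1 hz)
      · exact (Finset.card_insert_le _ _).trans (by omega)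
      · intro P hP h
        have hPW : P ⊆ W := hP.trans Finset.sdiff_subset
        have hyP : y ∉ P := fun h' => by
          have := hP h'
          simp at this
        have hxP : x ∉ P := fun h' => hyP (hthru P hPW h h')
        refine h3 P ?_ h
        intro z hz
        have hz' := Finset.mem_sdiff.1 (hP hz)
        have e1 : z ≠ x := by rintro rfl; exact hxP hz
        have e2 : z ≠ y := by rintro rfl; exact hyP hz
        have e3 : z ∉ X := fun h => hz'.2 (Finset.mem_insert_of_mem h)
        simp [e1, e2, e3, hz'.1]
  · rcases ih _ hltx (W.erase x) (insert y (N.erase x)) (m + 1) rfl hnox with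
      ⟨P, h1, h2, h3⟩ | ⟨X, h1, h2, h3⟩
    · left
      have hxP : ∀ i, x ∉ P i := fun i h => by simpa using h2 i h
      refine ⟨fun i => if y ∈ P i then insert x (P i) else P i, ?_, ?_, ?_⟩
      · intro i
        dsimp only
        split_ifs with hyP
        · refine ⟨?_, ?_⟩
          · refine (h1 i).1.trans ?_
            have e1 : (P i ∩ insert y (N.erase x)) ⊆ insert y ((P i ∩ N).erase y) := by
              intro z hz
              simp only [Finset.mem_inter, Finset.mem_insert, Finset.mem_erase] at hz ⊢
              tauto
            have e2 : insert x ((P i ∩ N).erase y) ⊆ insert x (P i) ∩ N := by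
              intro z hz
              simp only [Finset.mem_inter, Finset.mem_insert, Finset.mem_erase] at hz ⊢
              rcases hz with rfl | hz
              · exact ⟨Or.inl rfl, hxN⟩
              · exact ⟨Or.inr hz.2.1, hz.2.2⟩
            have e3 := Finset.card_le_card e1
            have e4 := Finset.card_le_card e2
            rw [Finset.card_insert_of_notMem (by simp)] at e3
            rw [Finset.card_insert_of_notMem (by simp [hxP i])] at e4
            omega
          · intro z hz
            rcases Finset.mem_insert.1 hz with rfl | hz
            · have : 0 < (nb G (insert z (P i)) z).card :=
                Finset.card_pos.2 ⟨y, by simp [hyP, hxy]⟩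
              rw [if_pos hxN]; omega
            · have hzx : z ≠ x := fun e => hxP i (e ▸ hz)
              have h5 := (h1 i).2 z hz
              by_cases hzy : z = y
              · subst hzy
                have e1 : insert x (nb G (P i) z) ⊆ nb G (insert x (P i)) z := by
                  intro w hw
                  simp only [Finset.mem_insert, mem_nb] at hw ⊢
                  rcases hw with rfl | hw
                  · exact ⟨Or.inl rfl, hxy.symm⟩
                  · exact ⟨Or.inr hw.1, hw.2⟩
                have e2 := Finset.card_le_card e1
                rw [Finset.card_insert_of_notMem (by simp [hxP i])] at e2
                simp only [Finset.mem_insert, true_or, if_true] at h5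
                omega
              · have e1 := Finset.card_le_card
                  (nb_mono (G := G) (Finset.subset_insert x (P i)) z)
                have e2 : (z ∈ insert y (N.erase x)) ↔ z ∈ N := by simp [hzy, hzx]
                simp only [e2] at h5
                omega
        · refine ⟨?_, ?_⟩
          · refine (h1 i).1.trans (Finset.card_le_card ?_)
            intro z hz
            simp only [Finset.mem_inter, Finset.mem_insert, Finset.mem_erase] at hz ⊢
            rcases hz.2 with rfl | h
            · exact absurd hz.1 hyP
            · exact ⟨hz.1, h.2⟩
          · intro z hz
            have hzx : z ≠ x := by rintro rfl; exact hxP i hz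
            have hzy : z ≠ y := by rintro rfl; exact hyP hz
            have h5 := (h1 i).2 z hz
            have e2 : (z ∈ insert y (N.erase x)) ↔ z ∈ N := by simp [hzy, hzx]
            simpa only [e2] using h5
      · intro i
        dsimp only
        split_ifs with hyP
        · intro z hz
          rcases Finset.mem_insert.1 hz with rfl | hz
          · exact hx
          · exact Finset.erase_subset _ _ (h2 i hz)
        · exact (h2 i).trans (Finset.erase_subset _ _)
      · intro i j hij
        have h4 := h3 i j hij
        dsimp only
        split_ifs with hi hj hj
        · exact absurd hj (Finset.disjoint_left.1 h4 hi)
        · exact Finset.disjoint_insert_left.2 ⟨hxP j, h4⟩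
        · exact Finset.disjoint_insert_right.2 ⟨hxP i, h4⟩
        · exact h4
    · right
      refine ⟨X, h1.trans (Finset.erase_subset _ _), h2, ?_⟩
      intro P hP h
      have hPW : P ⊆ W := hP.trans Finset.sdiff_subset
      by_cases hxP : x ∈ P
      · have hyP := hthru P hPW h hxP
        refine h3 (P.erase x) ?_ ⟨?_, ?_⟩
        · intro z hz
          have hz' := Finset.mem_sdiff.1 (hP (Finset.mem_of_mem_erase hz))
          simp [Finset.ne_of_mem_erase hz, hz'.1, hz'.2]
        · refine h.1.trans ?_
          have e1 : insert y ((P ∩ N).erase x) ⊆ P.erase x ∩ insert y (N.erase x) := by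
            intro z hz
            simp only [Finset.mem_inter, Finset.mem_insert, Finset.mem_erase] at hz ⊢
            rcases hz with rfl | hz
            · exact ⟨⟨hyx, hyP⟩, Or.inl rfl⟩
            · exact ⟨⟨hz.1, hz.2.1⟩, Or.inr ⟨hz.1, hz.2.2⟩⟩
          have e2 := Finset.card_le_card e1
          rw [Finset.card_insert_of_notMem (by simp [hyN]),
            Finset.card_erase_of_mem (by simp [hxP, hxN])] at e2
          omega
        · intro z hz
          have hzx := Finset.ne_of_mem_erase hz
          have hzP := Finset.mem_of_mem_erase hz
          have h5 := h.2 z hzP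
          by_cases hzy : z = y
          · subst hzy
            simp only [hyN, if_false] at h5
            have e1 : nb G P z ⊆ insert x (nb G (P.erase x) z) := by
              intro w hw
              simp only [Finset.mem_insert, mem_nb, Finset.mem_erase] at hw ⊢
              tauto
            have e2 := (Finset.card_le_card e1).trans (Finset.card_insert_le _ _)
            simp only [Finset.mem_insert, true_or, if_true]
            omega
          · have e1 : nb G P z ⊆ nb G (P.erase x) z := by
              intro w hw
              simp only [mem_nb, Finset.mem_erase] at hw ⊢
              refine ⟨⟨?_, hw.1⟩, hw.2⟩
              rintro rfl
              exact hzy (huniq z (hPW hzP) hw.2.symm)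
            have e2 := Finset.card_le_card e1
            have e3 : (z ∈ insert y (N.erase x)) ↔ z ∈ N := by simp [hzy, hzx]
            simp only [e3]
            omega
      · refine h3 P ?_ ⟨?_, ?_⟩
        · intro z hz
          have hz' := Finset.mem_sdiff.1 (hP hz)
          have e1 : z ≠ x := by rintro rfl; exact hxP hz
          simp [e1, hz'.1, hz'.2]
        · refine h.1.trans (Finset.card_le_card ?_)
          intro z hz
          simp only [Finset.mem_inter, Finset.mem_insert, Finset.mem_erase] at hz ⊢
          exact ⟨hz.1, Or.inr ⟨fun e => hxP (e ▸ hz.1), hz.2⟩⟩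
        · intro z hz
          refine (h.2 z hz).trans ?_
          have hzx : z ≠ x := by rintro rfl; exact hxP hz
          by_cases hzN : z ∈ N
          · simp [hzN, hzx]
          · simp [hzN]

/-! ### Structure of graphs with few disjoint cycles -/

/-- Vertices which each see many disjoint petals give equally many disjoint petals, chosen
greedily among the petals of size at most `l`. -/
lemma greedy_petals {V : Type*} [DecidableEq V] [Fintype V] (G : SimpleGraph V) (W : Finset V)
    (k l : ℕ) (hl : 1 ≤ l) (hn : Fintype.card V ≤ l * l) (U : Finset V) :
    U.card ≤ k + 1 →
    (∀ u ∈ U, ∃ P : Fin ((k + 3) * l) → Finset V, (∀ i, Petal G (nb G W u) (P i)) ∧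
      (∀ i, P i ⊆ W) ∧ ∀ i j, i ≠ j → Disjoint (P i) (P j)) →
    ∃ P : V → Finset V, (∀ u ∈ U, Petal G (nb G W u) (P u) ∧ P u ⊆ W ∧ (P u).card ≤ l) ∧
      ∀ u ∈ U, ∀ v ∈ U, u ≠ v → Disjoint (P u) (P v) := by
  classical
  induction U using Finset.induction_on with
  | empty => intro _ _; exact ⟨fun _ => ∅, by simp, by simp⟩
  | insert u U hu ih =>
    intro hc hU
    rw [Finset.card_insert_of_notMem hu] at hc
    obtain ⟨P, hP, hPd⟩ := ih (by omega) (fun v hv => hU v (Finset.mem_insert_of_mem hv))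
    obtain ⟨Q, hQ, hQW, hQd⟩ := hU u (Finset.mem_insert_self _ _)
    set T := U.biUnion P with hT
    have hTc : T.card ≤ k * l := by
      refine (Finset.card_biUnion_le_card_mul U P l (fun v hv => (hP v hv).2.2)).trans ?_
      exact Nat.mul_le_mul_right _ (by omega)
    have hdisj : ∀ s : Finset (Fin ((k + 3) * l)), (s : Set _).PairwiseDisjoint Q :=
      fun s i _ j _ hij => hQd i j hij
    set b1 := Finset.univ.filter (fun i => l < (Q i).card) with hb1
    set b2 := Finset.univ.filter (fun i => ¬ Disjoint (Q i) T) with hb2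
    have h1 : b1.card ≤ l := by
      have e1 : b1.card * l ≤ ∑ i ∈ b1, (Q i).card := by
        rw [← smul_eq_mul]
        apply Finset.card_nsmul_le_sum
        intro i hi
        exact (Finset.mem_filter.1 hi).2.le
      rw [← Finset.card_biUnion (fun i _ j _ hij => hQd i j hij)] at e1
      have e2 := Finset.card_le_univ (b1.biUnion Q)
      exact Nat.le_of_mul_le_mul_right (e1.trans (e2.trans hn)) hl
    have h2 : b2.card ≤ k * l := by
      have e1 : b2.card * 1 ≤ ∑ i ∈ b2, (Q i ∩ T).card := by
        rw [← smul_eq_mul]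
        apply Finset.card_nsmul_le_sum
        intro i hi
        have := (Finset.mem_filter.1 hi).2
        rw [Finset.not_disjoint_iff] at this
        obtain ⟨a, ha, ha'⟩ := this
        exact Finset.card_pos.2 ⟨a, Finset.mem_inter.2 ⟨ha, ha'⟩⟩
      rw [← Finset.card_biUnion (fun i _ j _ hij => (hQd i j hij).mono Finset.inter_subset_left
        Finset.inter_subset_left)] at e1
      have e2 : b2.biUnion (fun i => Q i ∩ T) ⊆ T := by
        intro z hz
        obtain ⟨i, _, hi⟩ := Finset.mem_biUnion.1 hz
        exact (Finset.mem_inter.1 hi).2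
      have := Finset.card_le_card e2
      omega
    have hex : ∃ i, i ∉ b1 ∪ b2 := by
      by_contra! h
      have e1 : (Finset.univ : Finset (Fin ((k + 3) * l))) ⊆ b1 ∪ b2 := fun i _ => h i
      have e2 := (Finset.card_le_card e1).trans (Finset.card_union_le _ _)
      rw [Finset.card_univ, Fintype.card_fin] at e2
      have : (k + 3) * l = k * l + 3 * l := by ring
      omega
    obtain ⟨i, hi⟩ := hex
    simp only [hb1, hb2, Finset.mem_union, Finset.mem_filter, Finset.mem_univ, true_and, not_or,
      not_lt, not_not] at hi
    have hdT : ∀ v ∈ U, Disjoint (Q i) (P v) := fun v hv =>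
      hi.2.mono_right (Finset.subset_biUnion_of_mem P hv)
    have hne : ∀ v ∈ U, v ≠ u := by rintro v hv rfl; exact hu hv
    refine ⟨Function.update P u (Q i), ?_, ?_⟩
    · intro v hv
      rcases Finset.mem_insert.1 hv with rfl | hv
      · rw [Function.update_self]; exact ⟨hQ i, hQW i, hi.1⟩
      · rw [Function.update_of_ne (hne v hv)]; exact hP v hv
    · intro v hv w hw hvw
      by_cases hvu : v = u
      · have hwU : w ∈ U := (Finset.mem_insert.1 hw).resolve_left (fun e => hvw (hvu.trans e.symm))
        rw [hvu, Function.update_self, Function.update_of_ne (hne w hwU)]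
        exact hdT w hwU
      · have hvU : v ∈ U := (Finset.mem_insert.1 hv).resolve_left hvu
        rw [Function.update_of_ne hvu]
        by_cases hwu : w = u
        · rw [hwu, Function.update_self]
          exact (hdT v hvU).symm
        · rw [Function.update_of_ne hwu]
          exact hPd v hvU w ((Finset.mem_insert.1 hw).resolve_left hwu) hvw

lemma packs_of_finset {V : Type*} [DecidableEq V] [Fintype V] {G : SimpleGraph V} (U : Finset V)
    (S : V → Finset V) (hS : ∀ u ∈ U, Core G (S u))
    (hd : ∀ u ∈ U, ∀ v ∈ U, u ≠ v → Disjoint (S u) (S v)) : Packs G Finset.univ U.card := by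
  refine ⟨fun i => S (U.equivFin.symm i), fun i => hS _ (U.equivFin.symm i).2, by simp, ?_⟩
  intro i j hij
  refine hd _ (U.equivFin.symm i).2 _ (U.equivFin.symm j).2 ?_
  intro h
  exact hij (U.equivFin.symm.injective (Subtype.ext h))

/-- The vertices of `W` whose root under `ρ` is `c`. -/
def comp {V : Type*} [DecidableEq V] (ρ : V → V) (W : Finset V) (c : V) : Finset V :=
  W.filter (fun x => ρ x = c)

@[simp] lemma mem_comp {V : Type*} [DecidableEq V] {ρ : V → V} {W : Finset V} {c x : V} :
    x ∈ comp ρ W c ↔ x ∈ W ∧ ρ x = c := by simp [comp]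

lemma roots_comp {V : Type*} [DecidableEq V] {p : V → Option V} {W : Finset V} {ρ : V → V}
    (h2 : ∀ x ∈ roots p W, ρ x = x)
    (h3 : ∀ x ∈ W, ∀ y ∈ W, p x = some y → ρ x = ρ y) (c x : V)
    (hx : x ∈ W) (hxc : ρ x = c) (hr : ∀ y ∈ comp ρ W c, p x ≠ some y) : x = c := by
  rw [← hxc]
  refine (h2 x (mem_roots.2 ⟨hx, fun y hy h => ?_⟩)).symm
  exact hr y (mem_comp.2 ⟨hy, by rw [← h3 x hx y hy h, hxc]⟩) h

/-- Only boundedly many components of the forest see `2 * (k + 1)` vertices of `M`: otherwise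
`2 * (k + 1)` components see a common set of that size, and pairing up vertices and components
yields `k + 1` disjoint cycles. -/
lemma heavy_le {V : Type*} [DecidableEq V] [Fintype V] {G : SimpleGraph V} {W : Finset V}
    {p : V → Option V} {rk : V → ℕ} (hp : IsPar G W p rk) {M Y : Finset V}
    (hMY : Disjoint M Y) (k : ℕ) (hpack : ¬ Packs G Finset.univ (k + 1)) {ρ : V → V}
    (h2 : ∀ x ∈ roots p Y, ρ x = x)
    (h3 : ∀ x ∈ Y, ∀ y ∈ Y, p x = some y → ρ x = ρ y) (D : V → Finset V)
    (hD : ∀ c, ∀ u ∈ D c, u ∈ M ∧ (nb G (comp ρ Y c) u).Nonempty) (R : Finset V) :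
    (R.filter (fun c => (k + 1) * 2 ≤ (D c).card)).card
      ≤ (2 * k + 1) * M.card ^ ((k + 1) * 2) := by
  classical
  by_contra! hlt
  have hch : ∀ c ∈ R.filter (fun c => (k + 1) * 2 ≤ (D c).card),
      ∃ T, T ⊆ D c ∧ T.card = (k + 1) * 2 := by
    intro c hc
    exact Finset.exists_subset_card_eq (Finset.mem_filter.1 hc).2
  choose! T hTD hTc using hch
  have hmaps : ∀ c ∈ R.filter (fun c => (k + 1) * 2 ≤ (D c).card),
      T c ∈ M.powersetCard ((k + 1) * 2) := by
    intro c hc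
    rw [Finset.mem_powersetCard]
    exact ⟨fun u hu => (hD c u (hTD c hc hu)).1, hTc c hc⟩
  have hlt2 : (M.powersetCard ((k + 1) * 2)).card * (2 * k + 1)
      < (R.filter (fun c => (k + 1) * 2 ≤ (D c).card)).card := by
    rw [Finset.card_powersetCard]
    calc _ ≤ M.card ^ ((k + 1) * 2) * (2 * k + 1) :=
          Nat.mul_le_mul_right _ (Nat.choose_le_pow _ _)
      _ < _ := by rw [mul_comm]; exact hlt
  obtain ⟨A, hA, hfib⟩ := Finset.exists_lt_card_fiber_of_mul_lt_card_of_maps_to hmaps hlt2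
  rw [Finset.mem_powersetCard] at hA
  obtain ⟨F, hF, hFc⟩ := Finset.exists_subset_card_eq (n := (k + 1) * 2) (by omega :
    (k + 1) * 2 ≤ ((R.filter (fun c => (k + 1) * 2 ≤ (D c).card)).filter
      (fun c => T c = A)).card)
  have eA : Nonempty (Fin (k + 1) × Fin 2 ≃ A) :=
    ⟨Fintype.equivOfCardEq (by simp [hA.2])⟩
  have eF : Nonempty (Fin (k + 1) × Fin 2 ≃ F) :=
    ⟨Fintype.equivOfCardEq (by simp [hFc])⟩
  obtain ⟨eA⟩ := eA
  obtain ⟨eF⟩ := eF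
  have hadj : ∀ a b : Fin (k + 1) × Fin 2, ∃ y, y ∈ Y ∧ ρ y = (eF b : V) ∧
      G.Adj (eA a) y := by
    intro a b
    have hb := Finset.mem_filter.1 (hF (eF b).2)
    have ha : (eA a : V) ∈ T (eF b) := by rw [hb.2]; exact (eA a).2
    obtain ⟨y, hy⟩ := (hD _ _ (hTD _ hb.1 ha)).2
    simp only [mem_nb, mem_comp] at hy
    exact ⟨y, hy.1.1, hy.1.2, hy.2⟩
  choose y hyY hyρ hya using hadj
  have hAM : ∀ a, (eA a : V) ∈ M := fun a => hA.1 (eA a).2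
  have hcore : ∀ i : Fin (k + 1), ∃ S, Core G S ∧ S ⊆
      (Finset.univ.image (fun b : Fin 2 => (eA (i, b) : V))) ∪
      (Y.filter (fun x => ∃ b : Fin 2, ρ x = eF (i, b))) := by
    intro i
    by_contra! hcon
    refine hp.core_of_cross (U := Finset.univ.image (fun b : Fin 2 => (eA (i, b) : V)))
      (Y := Y.filter (fun x => ∃ b : Fin 2, ρ x = eF (i, b))) ?_
      (Finset.univ.image (fun t : Fin 2 × Fin 2 => ((eA (i, t.1) : V), y (i, t.1) (i, t.2))))
      ?_ ?_ (by simp) (fun S hS hc => hcon S hc hS)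
    · rw [Finset.disjoint_left]
      intro x hx hx'
      obtain ⟨b, -, rfl⟩ := Finset.mem_image.1 hx
      exact Finset.disjoint_left.1 hMY (hAM _) (Finset.mem_filter.1 hx').1
    · intro t ht
      obtain ⟨b, -, rfl⟩ := Finset.mem_image.1 ht
      refine ⟨by simp, ?_, hya _ _⟩
      rw [Finset.mem_filter]
      exact ⟨hyY _ _, b.2, hyρ _ _⟩
    · have e1 : (Finset.univ.image (fun b : Fin 2 => (eA (i, b) : V))).card ≤ 2 :=
        Finset.card_image_le.trans (by simp)
      have e2 : (roots p (Y.filter (fun x => ∃ b : Fin 2, ρ x = eF (i, b)))).card ≤ 2 := by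
        have : roots p (Y.filter (fun x => ∃ b : Fin 2, ρ x = eF (i, b))) ⊆
            Finset.univ.image (fun b : Fin 2 => (eF (i, b) : V)) := by
          intro x hx
          rw [mem_roots, Finset.mem_filter] at hx
          obtain ⟨⟨hxY, b, hb⟩, hx2⟩ := hx
          rw [Finset.mem_image]
          refine ⟨b, by simp, (roots_comp h2 h3 _ x hxY hb ?_).symm⟩
          intro z hz
          rw [mem_comp] at hz
          exact hx2 z (Finset.mem_filter.2 ⟨hz.1, b, hz.2⟩)
        exact (Finset.card_le_card this).trans (Finset.card_image_le.trans (by simp))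
      have e3 : (Finset.univ.image (fun t : Fin 2 × Fin 2 =>
          ((eA (i, t.1) : V), y (i, t.1) (i, t.2)))).card = 4 := by
        rw [Finset.card_image_of_injective]
        · simp
        · rintro ⟨a, b⟩ ⟨a', b'⟩ h
          simp only [Prod.mk.injEq] at h
          have ha : a = a' := by simpa using eA.injective (Subtype.ext h.1)
          have hb : (eF (i, b) : V) = eF (i, b') := by
            rw [← hyρ (i, a) (i, b), ← hyρ (i, a') (i, b'), h.2]
          have hb' : b = b' := by simpa using eF.injective (Subtype.ext hb)
          rw [ha, hb']
      omega
  choose S hS hSs using hcore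
  apply hpack
  refine ⟨S, hS, by simp, ?_⟩
  intro i j hij
  rw [Finset.disjoint_left]
  intro x hx hx'
  have h4 := hSs i hx
  have h5 := hSs j hx'
  simp only [Finset.mem_union, Finset.mem_image, Finset.mem_univ, true_and,
    Finset.mem_filter] at h4 h5
  rcases h4 with ⟨b, rfl⟩ | ⟨hxY, b, hb⟩
  · rcases h5 with ⟨b', hb'⟩ | h5
    · have := eA.injective (Subtype.ext hb')
      simp only [Prod.mk.injEq] at this
      exact hij this.1.symm
    · exact Finset.disjoint_left.1 hMY (hAM _) h5.1
  · rcases h5 with ⟨b', rfl⟩ | ⟨-, b', hb'⟩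
    · exact Finset.disjoint_left.1 hMY (hAM _) hxY
    · have := eF.injective (Subtype.ext (hb.symm.trans hb'))
      simp only [Prod.mk.injEq] at this
      exact hij this.1

open Classical in
/-- The number of vertices with no parent or with parent in `X`. -/
noncomputable def cnt {V : Type*} [Fintype V] (p : V → Option V) (X : Finset V) : ℕ :=
  (Finset.univ.filter (fun x => p x = none ∨ ∃ y ∈ X, p x = some y)).card

lemma IsPar.roots_le_cnt {V : Type*} [Fintype V] [DecidableEq V] {G : SimpleGraph V}
    {W : Finset V} {p : V → Option V} {rk : V → ℕ} (hp : IsPar G W p rk) (X : Finset V) :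
    (roots p (W \ X)).card ≤ cnt p X := by
  classical
  apply Finset.card_le_card
  intro x hx
  rw [mem_roots] at hx
  simp only [Finset.mem_filter, Finset.mem_univ, true_and]
  rcases h : p x with _ | y
  · left; rfl
  · right
    refine ⟨y, ?_, rfl⟩
    by_contra hyX
    exact hx.2 y (Finset.mem_sdiff.2 ⟨(hp.mem x y h).2.1, hyX⟩) h

/-- The edges between `M` and a forest `Y`, each vertex of `M` being joined to `Y` acyclically,
number at most `2 * k + 1` per component, up to an error controlled by `heavy_le`. -/
lemma cross_le {V : Type*} [DecidableEq V] [Fintype V] {G : SimpleGraph V} {W : Finset V}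
    {p : V → Option V} {rk : V → ℕ} (hp : IsPar G W p rk) {M Y : Finset V}
    (hMY : Disjoint M Y) (k : ℕ) (hpack : ¬ Packs G Finset.univ (k + 1))
    (hno : ∀ u ∈ M, NoCore G (insert u Y)) :
    ∑ u ∈ M, (nb G Y u).card ≤ (2 * k + 1) * (roots p Y).card
      + M.card * ((2 * k + 1) * M.card ^ ((k + 1) * 2)) := by
  classical
  obtain ⟨ρ, h1, h2, h3⟩ := hp.exists_root_map Y.card Y rfl
  set D : V → Finset V := fun c => M.filter (fun u => (nb G (comp ρ Y c) u).Nonempty) with hDdef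
  have hone : ∀ u ∈ M, ∀ c, (nb G (comp ρ Y c) u).card ≤ 1 := by
    intro u hu c
    have hsub : comp ρ Y c ⊆ Y := Finset.filter_subset _ _
    refine (hp.nb_le_roots (fun h => Finset.disjoint_left.1 hMY hu (hsub h))
      ((hno u hu).mono (Finset.insert_subset_insert _ hsub))).trans ?_
    rw [Finset.card_le_one]
    have : ∀ x ∈ roots p (comp ρ Y c), x = c := by
      intro x hx
      rw [mem_roots, mem_comp] at hx
      exact roots_comp h2 h3 c x hx.1.1 hx.1.2 hx.2
    intro a ha b hb
    rw [this a ha, this b hb]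
  have hsum : ∀ u ∈ M, (nb G Y u).card ≤ ∑ c ∈ roots p Y,
      if (nb G (comp ρ Y c) u).Nonempty then 1 else 0 := by
    intro u hu
    have hsub : nb G Y u ⊆ (roots p Y).biUnion (fun c => nb G (comp ρ Y c) u) := by
      intro y hy
      rw [mem_nb] at hy
      rw [Finset.mem_biUnion]
      exact ⟨ρ y, h1 y hy.1, by simp [hy.1, hy.2]⟩
    refine (Finset.card_le_card hsub).trans (Finset.card_biUnion_le.trans ?_)
    refine Finset.sum_le_sum (fun c _ => ?_)
    split_ifs with h
    · exact hone u hu c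
    · rw [Finset.not_nonempty_iff_eq_empty] at h
      simp [h]
  have hheavy := heavy_le hp hMY k hpack h2 h3 D
    (fun c u hu => Finset.mem_filter.1 hu) (roots p Y)
  calc ∑ u ∈ M, (nb G Y u).card
      ≤ ∑ u ∈ M, ∑ c ∈ roots p Y, (if (nb G (comp ρ Y c) u).Nonempty then 1 else 0) :=
        Finset.sum_le_sum hsum
    _ = ∑ c ∈ roots p Y, (D c).card := by
        rw [Finset.sum_comm]
        refine Finset.sum_congr rfl (fun c _ => ?_)
        rw [hDdef, Finset.card_filter]
    _ ≤ ∑ c ∈ roots p Y, ((2 * k + 1) + if (k + 1) * 2 ≤ (D c).card then M.card else 0) := by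
        refine Finset.sum_le_sum (fun c _ => ?_)
        split_ifs with h
        · have := Finset.card_le_card (Finset.filter_subset
            (fun u => (nb G (comp ρ Y c) u).Nonempty) M)
          exact this.trans (by omega)
        · omega
    _ = (roots p Y).card * (2 * k + 1)
          + ((roots p Y).filter (fun c => (k + 1) * 2 ≤ (D c).card)).card * M.card := by
        rw [Finset.sum_add_distrib, ← Finset.sum_filter]
        simp
    _ ≤ _ := by
        rw [mul_comm (roots p Y).card, mul_comm _ M.card]
        exact Nat.add_le_add_left (Nat.mul_le_mul_left _ hheavy) _

/-- The error term in the bound on the number of edges meeting the small-degree part `M` of the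
blocker. -/
def errS (k r m : ℕ) : ℕ :=
  r * ((2 * k + 1) * r ^ ((k + 1) * 2)) + r * (k + r + r * m)

/-- A graph without `k + 1` disjoint cycles splits into at most `k` vertices `K`, a small set `M`
meeting few edges, and a forest; `X` is a small set of forest vertices destroying all cycles
through a single vertex of `M`. -/
structure IsDecomp {V : Type*} [DecidableEq V] [Fintype V] (G : SimpleGraph V) (k r m : ℕ)
    (K M X : Finset V) (p : V → Option V) (rk : V → ℕ) : Prop where
  cardK : K.card ≤ k
  cardM : M.card ≤ r
  cardX : X.card ≤ r * m
  disj : Disjoint K M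
  subX : X ⊆ (K ∪ M)ᶜ
  par : IsPar G (K ∪ M)ᶜ p rk
  noCore : ∀ u ∈ M, NoCore G (insert u ((K ∪ M)ᶜ \ X))
  cross : ∑ u ∈ M, (nb G Finset.univ u).card ≤ (2 * k + 1) * cnt p X + errS k r m

theorem exists_decomp {V : Type*} [DecidableEq V] [Fintype V] (G : SimpleGraph V) (k i l : ℕ)
    (hi : 1 ≤ i) (hni : Fintype.card V < 2 ^ i) (hl : 1 ≤ l) (hnl : Fintype.card V ≤ l * l)
    (hpack : ¬ Packs G Finset.univ (k + 1)) :
    ∃ K M X p rk, IsDecomp G k ((2 * i + 2) * (k + 1)) ((k + 3) * l) K M X p rk := by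
  classical
  set r := (2 * i + 2) * (k + 1) with hr
  set m := (k + 3) * l with hm
  obtain ⟨Q, -, hQc, hQ⟩ := (exists_small_blocker i hi _ Finset.univ G (k + 1) rfl
    (by simpa using hni)).resolve_left hpack
  rw [← Finset.compl_eq_univ_sdiff] at hQ
  set W := Qᶜ with hW
  set K := Q.filter (fun u => ∃ P : Fin m → Finset V, (∀ i, Petal G (nb G W u) (P i)) ∧
      (∀ i, P i ⊆ W) ∧ ∀ i j, i ≠ j → Disjoint (P i) (P j)) with hK
  have hKQ : K ⊆ Q := Finset.filter_subset _ _
  have hKc : K.card ≤ k := by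
    by_contra! hlt
    obtain ⟨U, hU, hUc⟩ := Finset.exists_subset_card_eq (Nat.succ_le_of_lt hlt)
    obtain ⟨P, hP, hPd⟩ := greedy_petals G W k l hl hnl U (by omega)
      (fun u hu => (Finset.mem_filter.1 (hU hu)).2)
    have hnW : ∀ u ∈ U, u ∉ W := fun u hu h => (Finset.mem_compl.1 h) (hKQ (hU hu))
    have := packs_of_finset (G := G) U (fun u => insert u (P u))
      (fun u hu => (hP u hu).1.core (fun h => hnW u hu ((hP u hu).2.1 h))) (by
        intro u hu v hv huv
        rw [Finset.disjoint_insert_left, Finset.disjoint_insert_right]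
        refine ⟨?_, fun h => hnW v hv ((hP u hu).2.1 h), hPd u hu v hv huv⟩
        rw [Finset.mem_insert, not_or]
        exact ⟨huv, fun h => hnW u hu ((hP v hv).2.1 h)⟩)
    rw [hUc] at this
    exact hpack this
  set M := Q \ K with hM
  have hKM : K ∪ M = Q := Finset.union_sdiff_of_subset hKQ
  have hfl : ∀ u ∈ M, ∃ X ⊆ W, X.card ≤ m ∧ ∀ P ⊆ W \ X, ¬ Petal G (nb G W u) P := by
    intro u hu
    refine (flower G _ W (nb G W u) m rfl hQ).resolve_left (fun h => ?_)
    have hu' := Finset.mem_sdiff.1 hu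
    exact hu'.2 (Finset.mem_filter.2 ⟨hu'.1, h⟩)
  choose! Xf hXW hXc hXP using hfl
  set X := M.biUnion Xf with hX
  have hMc : M.card ≤ r := (Finset.card_le_card Finset.sdiff_subset).trans hQc
  have hXr : X.card ≤ r * m :=
    (Finset.card_biUnion_le_card_mul M Xf m hXc).trans (Nat.mul_le_mul_right _ hMc)
  have hXsub : X ⊆ W := Finset.biUnion_subset.2 hXW
  obtain ⟨p, rk, hp⟩ := NoCore.exists_par _ W rfl hQ
  have hMW : Disjoint M W := by
    rw [Finset.disjoint_left]
    intro u hu hu'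
    exact Finset.mem_compl.1 hu' (Finset.mem_sdiff.1 hu).1
  have hno : ∀ u ∈ M, NoCore G (insert u (W \ X)) := by
    intro u hu S hS hc
    by_cases huS : u ∈ S
    · have hpet := hc.petal huS (hS.trans (Finset.insert_subset_insert _ Finset.sdiff_subset))
      refine hXP u hu _ ?_ hpet
      intro z hz
      have hz1 := hS (Finset.mem_of_mem_erase hz)
      rw [Finset.mem_insert, Finset.mem_sdiff] at hz1
      have hz2 := hz1.resolve_left (Finset.ne_of_mem_erase hz)
      exact Finset.mem_sdiff.2 ⟨hz2.1, fun h => hz2.2 (Finset.mem_biUnion.2 ⟨u, hu, h⟩)⟩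
    · refine hQ S (fun z hz => ?_) hc
      have hz1 := hS hz
      rw [Finset.mem_insert, Finset.mem_sdiff] at hz1
      exact (hz1.resolve_left (fun e => huS (e ▸ hz))).1
  refine ⟨K, M, X, p, rk, hKc, hMc, hXr, Finset.disjoint_sdiff, by rwa [hKM], by rwa [hKM],
    by rwa [hKM], ?_⟩
  have hcr := cross_le hp (hMW.mono_right (Finset.sdiff_subset (t := X))) k hpack hno
  have hroot := hp.roots_le_cnt X
  have hnb : ∀ u ∈ M, (nb G Finset.univ u).card ≤ (nb G (W \ X) u).card + (k + r + r * m) := by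
    intro u hu
    have hsub : nb G Finset.univ u ⊆ nb G (W \ X) u ∪ (K ∪ M ∪ X) := by
      intro y hy
      rw [mem_nb] at hy
      simp only [Finset.mem_union, mem_nb, Finset.mem_sdiff]
      by_cases h : y ∈ K ∪ M ∪ X
      · right; simpa only [Finset.mem_union] using h
      · left
        rw [Finset.mem_union, hKM, not_or] at h
        exact ⟨⟨Finset.mem_compl.2 h.1, h.2⟩, hy.2⟩
    have e1 := (Finset.card_le_card hsub).trans (Finset.card_union_le _ _)
    have e2 := (Finset.card_union_le (K ∪ M) X)
    have e3 := (Finset.card_union_le K M)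
    omega
  have hs2 : ∑ u ∈ M, (nb G Finset.univ u).card
      ≤ ∑ u ∈ M, (nb G (W \ X) u).card + M.card * (k + r + r * m) := by
    refine (Finset.sum_le_sum hnb).trans ?_
    rw [Finset.sum_add_distrib]
    simp
  refine hs2.trans ?_
  have e4 : M.card * ((2 * k + 1) * M.card ^ ((k + 1) * 2))
      ≤ r * ((2 * k + 1) * r ^ ((k + 1) * 2)) := by gcongr
  have e5 : M.card * (k + r + r * m) ≤ r * (k + r + r * m) := by gcongr
  have e6 : (2 * k + 1) * (roots p (W \ X)).card ≤ (2 * k + 1) * cnt p X := by gcongr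
  unfold errS
  omega

/-! ### Vertices outside a blocker -/

lemma cnt_mono {V : Type*} [Fintype V] (p : V → Option V) {X Y : Finset V} (h : X ⊆ Y) :
    cnt p X ≤ cnt p Y := by
  classical
  apply Finset.card_le_card
  intro x hx
  simp only [Finset.mem_filter, Finset.mem_univ, true_and] at hx ⊢
  exact hx.imp id (fun ⟨y, hy, e⟩ => ⟨y, h hy, e⟩)

lemma IsDecomp.deg_le_of_mem {V : Type*} [DecidableEq V] [Fintype V] {G : SimpleGraph V}
    {k r m : ℕ} {K M X : Finset V} {p : V → Option V} {rk : V → ℕ}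
    (h : IsDecomp G k r m K M X p rk) {B : Finset V} (hB : NoCore G Bᶜ) {v : V} (hvK : v ∈ K)
    (hvB : v ∉ B) : (nb G Finset.univ v).card ≤ cnt p B + (k + r + B.card) := by
  have hno : NoCore G (insert v ((K ∪ M)ᶜ \ B)) := by
    refine hB.mono (fun z hz => ?_)
    rw [Finset.mem_compl]
    rcases Finset.mem_insert.1 hz with rfl | hz
    · exact hvB
    · exact (Finset.mem_sdiff.1 hz).2
  have h1 := (h.par.nb_le_roots (by simp [hvK]) hno).trans (h.par.roots_le_cnt B)
  have hsub : nb G Finset.univ v ⊆ nb G ((K ∪ M)ᶜ \ B) v ∪ (K ∪ M ∪ B) := by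
    intro y hy
    rw [mem_nb] at hy
    simp only [Finset.mem_union, mem_nb, Finset.mem_sdiff, Finset.mem_compl]
    have := hy.2
    tauto
  have e1 := (Finset.card_le_card hsub).trans (Finset.card_union_le _ _)
  have e2 := (Finset.card_union_le (K ∪ M) B)
  have e3 := (Finset.card_union_le K M)
  have := h.cardK
  have := h.cardM
  omega

lemma IsDecomp.deg_le_of_notMem {V : Type*} [DecidableEq V] [Fintype V] {G : SimpleGraph V}
    {k r m : ℕ} {K M X : Finset V} {p : V → Option V} {rk : V → ℕ}
    (h : IsDecomp G k r m K M X p rk) {v : V} (hvK : v ∉ K) :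
    (nb G Finset.univ v).card ≤ cnt p (insert v X) + (k + r + r * m + 1) := by
  classical
  have := h.cardK
  have := h.cardM
  have := h.cardX
  have e3 := (Finset.card_union_le K M)
  by_cases hvM : v ∈ M
  · have h1 := ((h.par.nb_le_roots (by simp [hvM]) (h.noCore v hvM)).trans
      (h.par.roots_le_cnt X)).trans (cnt_mono p (Finset.subset_insert v X))
    have hsub : nb G Finset.univ v ⊆ nb G ((K ∪ M)ᶜ \ X) v ∪ (K ∪ M ∪ X) := by
      intro y hy
      rw [mem_nb] at hy
      simp only [Finset.mem_union, mem_nb, Finset.mem_sdiff, Finset.mem_compl]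
      have := hy.2
      tauto
    have e1 := (Finset.card_le_card hsub).trans (Finset.card_union_le _ _)
    have e2 := (Finset.card_union_le (K ∪ M) X)
    omega
  · have hsub : nb G Finset.univ v ⊆ (Finset.univ.filter
        (fun x => p x = none ∨ ∃ y ∈ insert v X, p x = some y)) ∪ ((K ∪ M) ∪ (p v).toFinset) := by
      intro y hy
      rw [mem_nb] at hy
      by_cases hyKM : y ∈ K ∪ M
      · simp only [Finset.mem_union] at hyKM ⊢
        tauto
      · rcases (h.par.adj v (by simp [hvK, hvM]) y (by simpa using hyKM)).1 hy.2 with h2 | h2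
        · simp [h2]
        · simp [h2]
    have e1 := (Finset.card_le_card hsub).trans (Finset.card_union_le _ _)
    have e2 := (Finset.card_union_le (K ∪ M) (p v).toFinset)
    have e4 : (p v).toFinset.card ≤ 1 := by
      rcases p v with _ | y <;> simp
    have e5 : cnt p (insert v X) = (Finset.univ.filter
        (fun x => p x = none ∨ ∃ y ∈ insert v X, p x = some y)).card := by
      unfold cnt; congr
    omega

/-! ### Weighted counting -/

/-- The subsets of `U` of size at most `j`. -/
def SS {α : Type*} (U : Finset α) (j : ℕ) : Finset (Finset α) :=
  U.powerset.filter (fun A => A.card ≤ j)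

@[simp] lemma mem_SS {α : Type*} {U : Finset α} {j : ℕ} {A : Finset α} :
    A ∈ SS U j ↔ A ⊆ U ∧ A.card ≤ j := by simp [SS]

lemma card_SS_le {α : Type*} (U : Finset α) (j : ℕ) {z : ℝ} (hz : 0 < z) (hz1 : z ≤ 1) :
    ((SS U j).card : ℝ) ≤ (z⁻¹) ^ j * (1 + z) ^ U.card := by
  have h1 : ((SS U j).card : ℝ) * z ^ j ≤ ∑ A ∈ SS U j, z ^ A.card := by
    rw [← nsmul_eq_mul]
    apply Finset.card_nsmul_le_sum
    intro A hA
    exact pow_le_pow_of_le_one hz.le hz1 (mem_SS.1 hA).2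
  have h2 : ∑ A ∈ SS U j, z ^ A.card ≤ ∑ A ∈ U.powerset, z ^ A.card :=
    Finset.sum_le_sum_of_subset_of_nonneg (Finset.filter_subset _ _)
      (fun _ _ _ => by positivity)
  have h3 : ∑ A ∈ U.powerset, z ^ A.card = (1 + z) ^ U.card := by
    rw [add_comm, ← Finset.sum_pow_mul_eq_add_pow]
    simp
  rw [inv_pow, inv_mul_eq_div, le_div_iff₀ (by positivity)]
  linarith

/-- Summing over all parent functions, each vertex contributes independently a factor of
at most `n + |B| * b + (|X| + 1) * (a * b)`, split according to where its parent lies. -/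
lemma sum_par_le {V : Type*} [DecidableEq V] [Fintype V] (X B : Finset V) {a b : ℝ} (ha : 1 ≤ a) (hb : 1 ≤ b) :
    ∑ p : V → Option V, a ^ cnt p X * b ^ cnt p B ≤
      ((Fintype.card V : ℝ) + B.card * b + (X.card + 1) * (a * b)) ^ Fintype.card V := by
  classical
  set w : Option V → ℝ := fun o =>
    (if o = none ∨ ∃ y ∈ X, o = some y then a else 1) *
    (if o = none ∨ ∃ y ∈ B, o = some y then b else 1) with hw
  have h1 : ∀ p : V → Option V, a ^ cnt p X * b ^ cnt p B = ∏ x, w (p x) := by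
    intro p
    rw [hw]
    simp only
    rw [Finset.prod_mul_distrib, Finset.prod_ite, Finset.prod_ite]
    simp only [cnt, Finset.prod_const, one_pow, mul_one]
    congr
  have h2 : ∑ o, w o ≤ (Fintype.card V : ℝ) + B.card * b + (X.card + 1) * (a * b) := by
    rw [Fintype.sum_option]
    have e1 : w none = a * b := by simp [hw]
    have hab : 0 ≤ a * b := by positivity
    have e2 : ∀ y : V, w (some y) ≤ 1 + (if y ∈ B then b else 0) +
        (if y ∈ X then a * b else 0) := by
      intro y
      simp only [hw, reduceCtorEq, Option.some.injEq, exists_eq_right', false_or]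
      split_ifs <;> nlinarith
    have e3 : ∑ y : V, w (some y) ≤ (Fintype.card V : ℝ) + B.card * b + X.card * (a * b) := by
      refine (Finset.sum_le_sum (fun y _ => e2 y)).trans (le_of_eq ?_)
      rw [Finset.sum_add_distrib, Finset.sum_add_distrib]
      simp
    rw [e1]
    linarith
  calc ∑ p : V → Option V, a ^ cnt p X * b ^ cnt p B
      = ∑ p : V → Option V, ∏ x, w (p x) := Finset.sum_congr rfl (fun p _ => h1 p)
    _ = (∑ o, w o) ^ Fintype.card V := by
        rw [← Finset.card_univ, ← Finset.prod_const, Finset.prod_univ_sum]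
        simp [Fintype.piFinset_univ]
    _ ≤ _ := by
        apply pow_le_pow_left₀ _ h2
        apply Finset.sum_nonneg
        intro o _
        simp only [hw]
        split_ifs <;> positivity

/-! ### Counting graphs by their decompositions -/

/-- The graph with edges given by a parent function and a set of ordered pairs. -/
def dec {V : Type*} (p : V → Option V) (E : Finset (V × V)) : SimpleGraph V :=
  SimpleGraph.fromRel (fun a b => (a, b) ∈ E ∨ p a = some b)

open Classical in
/-- The ordered pairs of adjacent vertices whose first entry lies in `M`. -/
noncomputable def crossE {V : Type*} [Fintype V] (G : SimpleGraph V) (M : Finset V) :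
    Finset (V × V) :=
  (M ×ˢ Finset.univ).filter (fun t => G.Adj t.1 t.2)

@[simp] lemma mem_crossE {V : Type*} [Fintype V] {G : SimpleGraph V} {M : Finset V} {t : V × V} :
    t ∈ crossE G M ↔ t.1 ∈ M ∧ G.Adj t.1 t.2 := by
  classical
  simp [crossE]

lemma card_crossE {V : Type*} [Fintype V] (G : SimpleGraph V) (M : Finset V) :
    (crossE G M).card = ∑ u ∈ M, (nb G Finset.univ u).card := by
  classical
  rw [← Finset.card_sigma]
  refine Finset.card_bij (fun t _ => ⟨t.1, t.2⟩) ?_ ?_ ?_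
  · rintro ⟨a, b⟩ h
    simpa using h
  · rintro ⟨a, b⟩ _ ⟨a', b'⟩ _ h
    simpa using h
  · rintro ⟨a, b⟩ h
    exact ⟨(a, b), by simpa using h, rfl⟩

lemma IsDecomp.dec_eq {V : Type*} [DecidableEq V] [Fintype V] {G : SimpleGraph V}
    {k r m : ℕ} {K M X : Finset V} {p : V → Option V} {rk : V → ℕ}
    (h : IsDecomp G k r m K M X p rk) {E : Finset (V × V)}
    (hE : ∀ a b, (a, b) ∈ E ↔ (a ∈ M ∨ a ∈ K) ∧ G.Adj a b) : dec p E = G := by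
  have hp : ∀ a b, p a = some b → G.Adj a b := by
    intro a b hab
    have := h.par.mem a b hab
    exact (h.par.adj a this.1 b this.2.1).2 (Or.inl hab)
  ext a b
  simp only [dec, SimpleGraph.fromRel_adj, hE]
  constructor
  · rintro ⟨-, (h1 | h1) | (h1 | h1)⟩
    · exact h1.2
    · exact hp a b h1
    · exact h1.2.symm
    · exact (hp b a h1).symm
  · intro hab
    refine ⟨hab.ne, ?_⟩
    by_cases ha : a ∈ M ∨ a ∈ K
    · exact Or.inl (Or.inl ⟨ha, hab⟩)
    by_cases hb : b ∈ M ∨ b ∈ K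
    · exact Or.inr (Or.inl ⟨hb, hab.symm⟩)
    have ha' : a ∈ (K ∪ M)ᶜ := by simp; tauto
    have hb' : b ∈ (K ∪ M)ᶜ := by simp; tauto
    exact ((h.par.adj a ha' b hb').1 hab).imp Or.inr Or.inr

lemma card_choices_le {V : Type*} [Fintype V] (k r x : ℕ) {z : ℝ} (hz : 0 < z) (hz1 : z ≤ 1) :
    ((SS (Finset.univ : Finset V) k ×ˢ SS (Finset.univ : Finset V) r ×ˢ
      SS (Finset.univ : Finset V) x ×ˢ (Finset.univ : Finset V)).card : ℝ) ≤
    (z⁻¹) ^ (k + r + x) * (1 + z) ^ (3 * Fintype.card V) * Fintype.card V := by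
  rw [Finset.card_product, Finset.card_product, Finset.card_product]
  push_cast
  have h1 := card_SS_le (Finset.univ : Finset V) k hz hz1
  have h2 := card_SS_le (Finset.univ : Finset V) r hz hz1
  have h3 := card_SS_le (Finset.univ : Finset V) x hz hz1
  rw [Finset.card_univ] at *
  calc _ ≤ ((z⁻¹) ^ k * (1 + z) ^ Fintype.card V) * (((z⁻¹) ^ r * (1 + z) ^ Fintype.card V) *
        (((z⁻¹) ^ x * (1 + z) ^ Fintype.card V) * Fintype.card V)) := by gcongr
    _ = _ := by ring

lemma card_cross_choices_le {V : Type*} [Fintype V] {M : Finset V} {r : ℕ} (hM : M.card ≤ r)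
    (L : ℕ) {z : ℝ} (hz : 0 < z) (hz1 : z ≤ 1) :
    ((SS (M ×ˢ (Finset.univ : Finset V)) L).card : ℝ) ≤
      (z⁻¹) ^ L * (1 + z) ^ (r * Fintype.card V) := by
  refine (card_SS_le _ L hz hz1).trans ?_
  rw [Finset.card_product, Finset.card_univ]
  have : (1 : ℝ) ≤ 1 + z := by linarith
  gcongr

/-- Graphs in which a vertex outside `K` has degree at least `a` are few: many vertices have a
parent among few vertices, and each such vertex is charged a factor `g`. -/
lemma card_big_outside {V : Type*} [DecidableEq V] [Fintype V] (k r m a : ℕ) {z g : ℝ}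
    (hz : 0 < z) (hz1 : z ≤ 1) (hg : 1 ≤ g) (S : Finset (SimpleGraph V))
    (hS : ∀ G ∈ S, ∃ K M X p rk v, IsDecomp G k r m K M X p rk ∧ v ∉ K ∧
      a ≤ (nb G Finset.univ v).card) :
    (S.card : ℝ) ≤ ((z⁻¹) ^ (k + r + r * m) * (1 + z) ^ (3 * Fintype.card V) * Fintype.card V) *
      (g ^ (k + r + r * m + 1) / g ^ a * ((z⁻¹) ^ errS k r m *
        (1 + z) ^ (r * Fintype.card V) * 2 ^ (k * Fintype.card V)) *
        ((Fintype.card V : ℝ) + (r * m + 2) * (g * (z⁻¹) ^ (2 * k + 1))) ^ Fintype.card V) := by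
  classical
  set n := Fintype.card V with hn
  set e := k + r + r * m + 1 with he
  set I := (SS (Finset.univ : Finset V) k ×ˢ SS (Finset.univ : Finset V) r ×ˢ
      SS (Finset.univ : Finset V) (r * m) ×ˢ (Finset.univ : Finset V)) with hI
  set T : (Finset V × Finset V × Finset V × V) → (V → Option V) →
      Finset (Finset (V × V) × Finset (V × V)) := fun i p =>
    SS (i.2.1 ×ˢ Finset.univ) ((2 * k + 1) * cnt p (insert i.2.2.2 i.2.2.1) + errS k r m) ×ˢ
      (i.1 ×ˢ Finset.univ).powerset with hT
  set F : (Finset V × Finset V × Finset V × V) → Finset (V → Option V) := fun i =>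
    Finset.univ.filter (fun p => a ≤ cnt p (insert i.2.2.2 i.2.2.1) + e) with hF
  set Ω := I.sigma (fun i => (F i).sigma (fun p => T i p)) with hΩ
  have hsub : S ⊆ Ω.image (fun w => dec w.2.1 (w.2.2.1 ∪ w.2.2.2)) := by
    intro G hG
    obtain ⟨K, M, X, p, rk, v, h, hvK, hdeg⟩ := hS G hG
    rw [Finset.mem_image]
    refine ⟨⟨(K, M, X, v), ⟨p, (crossE G M, crossE G K)⟩⟩, ?_, ?_⟩
    · simp only [hΩ, hI, hF, hT, Finset.mem_sigma, Finset.mem_product, mem_SS,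
        Finset.mem_filter, Finset.mem_powerset, Finset.subset_univ, Finset.mem_univ, true_and,
        and_true]
      refine ⟨⟨h.cardK, h.cardM, h.cardX⟩, hdeg.trans (h.deg_le_of_notMem hvK), ⟨?_, ?_⟩, ?_⟩
      · exact Finset.filter_subset _ _
      · rw [card_crossE]
        refine h.cross.trans ?_
        have := cnt_mono p (Finset.subset_insert v X)
        gcongr
      · exact Finset.filter_subset _ _
    · refine h.dec_eq (fun a b => ?_)
      simp only [Finset.mem_union, mem_crossE]
      tauto
  have hcard : (S.card : ℝ) ≤ ∑ i ∈ I, ∑ p ∈ F i, ((T i p).card : ℝ) := by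
    have h1 : S.card ≤ Ω.card := (Finset.card_le_card hsub).trans Finset.card_image_le
    rw [hΩ, Finset.card_sigma] at h1
    simp only [Finset.card_sigma] at h1
    exact_mod_cast h1
  have hZ : 1 ≤ z⁻¹ := (one_le_inv₀ hz).2 hz1
  have hin : ∀ i ∈ I, ∑ p ∈ F i, ((T i p).card : ℝ) ≤
      (g ^ e / g ^ a * ((z⁻¹) ^ errS k r m * (1 + z) ^ (r * n) * 2 ^ (k * n)) *
        ((n : ℝ) + (r * m + 2) * (g * (z⁻¹) ^ (2 * k + 1))) ^ n) := by
    rintro ⟨K, M, X, v⟩ hi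
    simp only [hI, Finset.mem_product, mem_SS, Finset.subset_univ, Finset.mem_univ, true_and,
      and_true] at hi
    obtain ⟨hK, hM, hX⟩ := hi
    have hterm : ∀ p ∈ F (K, M, X, v), ((T (K, M, X, v) p).card : ℝ) ≤
        g ^ e / g ^ a * ((z⁻¹) ^ errS k r m * (1 + z) ^ (r * n) * 2 ^ (k * n)) *
        ((g * (z⁻¹) ^ (2 * k + 1)) ^ cnt p (insert v X) * 1 ^ cnt p (∅ : Finset V)) := by
      intro p hp
      have hp' := (Finset.mem_filter.1 hp).2
      simp only at hp'
      set c := cnt p (insert v X) with hc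
      have e1 := card_cross_choices_le hM ((2 * k + 1) * c + errS k r m) hz hz1
      have e2 : (((K ×ˢ (Finset.univ : Finset V)).powerset.card : ℕ) : ℝ) ≤ 2 ^ (k * n) := by
        rw [Finset.card_powerset, Finset.card_product, Finset.card_univ]
        push_cast
        gcongr
        norm_num
      have e3 : 1 ≤ g ^ (c + e) / g ^ a := by
        rw [one_le_div (by positivity)]
        exact pow_le_pow_right₀ hg hp'
      have e4 : ((T (K, M, X, v) p).card : ℝ) ≤ ((z⁻¹) ^ ((2 * k + 1) * c + errS k r m) *
          (1 + z) ^ (r * n)) * 2 ^ (k * n) := by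
        simp only [hT]
        rw [Finset.card_product, Nat.cast_mul]
        refine mul_le_mul e1 e2 (by positivity) (by positivity)
      calc ((T (K, M, X, v) p).card : ℝ) ≤ ((z⁻¹) ^ ((2 * k + 1) * c + errS k r m) *
          (1 + z) ^ (r * n)) * 2 ^ (k * n) := e4
        _ ≤ (((z⁻¹) ^ ((2 * k + 1) * c + errS k r m) *
          (1 + z) ^ (r * n)) * 2 ^ (k * n)) * (g ^ (c + e) / g ^ a) :=
            le_mul_of_one_le_right (by positivity) e3
        _ = _ := by
            rw [mul_pow g, ← pow_mul, pow_add, pow_add]; ring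
    refine (Finset.sum_le_sum hterm).trans ?_
    rw [← Finset.mul_sum]
    have e5 : 1 ≤ g * (z⁻¹) ^ (2 * k + 1) := one_le_mul_of_one_le_of_one_le hg (one_le_pow₀ hZ)
    gcongr
    refine (Finset.sum_le_sum_of_subset_of_nonneg (Finset.subset_univ _)
      (fun _ _ _ => by positivity)).trans ?_
    refine (sum_par_le (insert v X) ∅ e5 le_rfl).trans ?_
    have e6 : ((insert v X).card : ℝ) ≤ r * m + 1 := by
      have := (Finset.card_insert_le v X).trans (Nat.succ_le_succ hX)
      exact_mod_cast this
    have e7 : (n : ℝ) + (∅ : Finset V).card * 1 +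
        ((insert v X).card + 1) * (g * (z⁻¹) ^ (2 * k + 1) * 1) ≤
        n + (r * m + 2) * (g * (z⁻¹) ^ (2 * k + 1)) := by
      have e8 : ((insert v X).card + 1 : ℝ) ≤ r * m + 2 := by linarith
      have e9 := mul_le_mul_of_nonneg_right e8 (le_trans zero_le_one e5)
      simp only [Finset.card_empty, Nat.cast_zero, mul_one, add_zero]
      linarith
    exact pow_le_pow_left₀ (by positivity) e7 _
  refine hcard.trans ((Finset.sum_le_card_nsmul _ _ _ hin).trans ?_)
  rw [nsmul_eq_mul]
  refine mul_le_mul_of_nonneg_right (card_choices_le k r (r * m) hz hz1) (by positivity)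

/-- Graphs with a blocker of size at most `b` missing some vertex `v` of `K` are few: the
neighbourhood of `v` is small up to the number of components left by the blocker, and every such
component is charged a factor `y⁻¹`. -/
lemma card_missing {V : Type*} [DecidableEq V] [Fintype V] (k r m b : ℕ) {z y : ℝ}
    (hz : 0 < z) (hz1 : z ≤ 1) (hy : 0 < y) (hy1 : y ≤ 1) (S : Finset (SimpleGraph V))
    (hS : ∀ G ∈ S, ∃ K M X p rk v B, IsDecomp G k r m K M X p rk ∧ v ∈ K ∧ v ∉ B ∧
      NoCore G Bᶜ ∧ B.card ≤ b) :
    (S.card : ℝ) ≤ ((z⁻¹) ^ (k + r + r * m) * (1 + z) ^ (3 * Fintype.card V) * Fintype.card V) *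
      ((y⁻¹) ^ b * (1 + y) ^ Fintype.card V) *
      ((z⁻¹) ^ errS k r m * (1 + z) ^ (r * Fintype.card V) * 2 ^ ((k - 1) * Fintype.card V) *
        ((y⁻¹) ^ (k + r + b) * (1 + y) ^ Fintype.card V) *
        ((Fintype.card V : ℝ) + b * y⁻¹ + (r * m + 1) * ((z⁻¹) ^ (2 * k + 1) * y⁻¹))
          ^ Fintype.card V) := by
  classical
  set n := Fintype.card V with hn
  set e := k + r + b with he
  set I₀ := (SS (Finset.univ : Finset V) k ×ˢ SS (Finset.univ : Finset V) r ×ˢ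
      SS (Finset.univ : Finset V) (r * m) ×ˢ (Finset.univ : Finset V)) with hI₀
  set I := (I₀ ×ˢ SS (Finset.univ : Finset V) b).filter (fun i => i.1.2.2.2 ∈ i.1.1) with hI
  set T : (Finset V × Finset V × Finset V × V) × Finset V → (V → Option V) →
      Finset (Finset (V × V) × Finset (V × V) × Finset V) := fun i p =>
    SS (i.1.2.1 ×ˢ Finset.univ) ((2 * k + 1) * cnt p i.1.2.2.1 + errS k r m) ×ˢ
      ((i.1.1.erase i.1.2.2.2) ×ˢ Finset.univ).powerset ×ˢ
      SS Finset.univ (cnt p i.2 + e) with hT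
  set Ω := I.sigma (fun i => (Finset.univ : Finset (V → Option V)).sigma (fun p => T i p)) with hΩ
  have hsub : S ⊆ Ω.image (fun w => dec w.2.1 (w.2.2.1 ∪ (w.2.2.2.1 ∪
      w.2.2.2.2.image (fun x => (w.1.1.2.2.2, x))))) := by
    intro G hG
    obtain ⟨K, M, X, p, rk, v, B, h, hvK, hvB, hno, hBb⟩ := hS G hG
    rw [Finset.mem_image]
    refine ⟨⟨((K, M, X, v), B), ⟨p, (crossE G M, crossE G (K.erase v), nb G Finset.univ v)⟩⟩,
      ?_, ?_⟩
    · simp only [hΩ, hI, hI₀, hT, Finset.mem_sigma, Finset.mem_product, mem_SS,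
        Finset.mem_filter, Finset.mem_powerset, Finset.subset_univ, Finset.mem_univ, true_and,
        and_true]
      refine ⟨⟨⟨⟨h.cardK, h.cardM, h.cardX⟩, hBb⟩, hvK⟩, ⟨?_, ?_⟩, ?_, ?_⟩
      · exact Finset.filter_subset _ _
      · rw [card_crossE]
        exact h.cross
      · exact Finset.filter_subset _ _
      · refine (h.deg_le_of_mem hno hvK hvB).trans ?_
        omega
    · refine h.dec_eq (fun a b => ?_)
      simp only [Finset.mem_union, mem_crossE, Finset.mem_image, mem_nb, Finset.mem_univ,
        true_and, Finset.mem_erase, Prod.mk.injEq]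
      constructor
      · rintro (h1 | h1 | ⟨x, hx, rfl, rfl⟩)
        · exact ⟨Or.inl h1.1, h1.2⟩
        · exact ⟨Or.inr h1.1.2, h1.2⟩
        · exact ⟨Or.inr hvK, hx⟩
      · rintro ⟨h1 | h1, h2⟩
        · exact Or.inl ⟨h1, h2⟩
        · by_cases hav : a = v
          · subst hav
            exact Or.inr (Or.inr ⟨b, h2, rfl, rfl⟩)
          · exact Or.inr (Or.inl ⟨⟨hav, h1⟩, h2⟩)
  have hcard : (S.card : ℝ) ≤ ∑ i ∈ I, ∑ p : V → Option V, ((T i p).card : ℝ) := by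
    have h1 : S.card ≤ Ω.card := (Finset.card_le_card hsub).trans Finset.card_image_le
    rw [hΩ, Finset.card_sigma] at h1
    simp only [Finset.card_sigma] at h1
    exact_mod_cast h1
  have hZ : 1 ≤ z⁻¹ := (one_le_inv₀ hz).2 hz1
  have hY : 1 ≤ y⁻¹ := (one_le_inv₀ hy).2 hy1
  have hin : ∀ i ∈ I, ∑ p : V → Option V, ((T i p).card : ℝ) ≤
      ((z⁻¹) ^ errS k r m * (1 + z) ^ (r * n) * 2 ^ ((k - 1) * n) *
        ((y⁻¹) ^ e * (1 + y) ^ n) *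
        ((n : ℝ) + b * y⁻¹ + (r * m + 1) * ((z⁻¹) ^ (2 * k + 1) * y⁻¹)) ^ n) := by
    rintro ⟨⟨K, M, X, v⟩, B⟩ hi
    simp only [hI, hI₀, Finset.mem_product, mem_SS, Finset.subset_univ, Finset.mem_univ, true_and,
      and_true, Finset.mem_filter] at hi
    obtain ⟨⟨⟨hK, hM, hX⟩, hB⟩, hvK⟩ := hi
    have hterm : ∀ p : V → Option V, ((T ((K, M, X, v), B) p).card : ℝ) ≤
        (z⁻¹) ^ errS k r m * (1 + z) ^ (r * n) * 2 ^ ((k - 1) * n) *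
        ((y⁻¹) ^ e * (1 + y) ^ n) *
        (((z⁻¹) ^ (2 * k + 1)) ^ cnt p X * (y⁻¹) ^ cnt p B) := by
      intro p
      have e1 := card_cross_choices_le hM ((2 * k + 1) * cnt p X + errS k r m) hz hz1
      have e2 : ((((K.erase v) ×ˢ (Finset.univ : Finset V)).powerset.card : ℕ) : ℝ)
          ≤ 2 ^ ((k - 1) * n) := by
        rw [Finset.card_powerset, Finset.card_product, Finset.card_univ,
          Finset.card_erase_of_mem hvK]
        push_cast
        gcongr
        norm_num
      have e3 := card_SS_le (Finset.univ : Finset V) (cnt p B + e) hy hy1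
      rw [Finset.card_univ] at e3
      have e4 : ((T ((K, M, X, v), B) p).card : ℝ) ≤
          ((z⁻¹) ^ ((2 * k + 1) * cnt p X + errS k r m) * (1 + z) ^ (r * n)) *
          (2 ^ ((k - 1) * n) * ((y⁻¹) ^ (cnt p B + e) * (1 + y) ^ n)) := by
        simp only [hT]
        rw [Finset.card_product, Nat.cast_mul, Finset.card_product, Nat.cast_mul]
        exact mul_le_mul e1 (mul_le_mul e2 e3 (by positivity) (by positivity)) (by positivity)
          (by positivity)
      refine e4.trans (le_of_eq ?_)
      rw [← pow_mul, pow_add, pow_add]; ring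
    refine (Finset.sum_le_sum (fun p _ => hterm p)).trans ?_
    rw [← Finset.mul_sum]
    have e5 : 1 ≤ (z⁻¹) ^ (2 * k + 1) := one_le_pow₀ hZ
    gcongr
    refine (sum_par_le X B e5 hY).trans ?_
    have e6 : (X.card : ℝ) ≤ r * m := by exact_mod_cast hX
    have e7 : (B.card : ℝ) ≤ b := by exact_mod_cast hB
    gcongr
  refine hcard.trans ((Finset.sum_le_card_nsmul _ _ _ hin).trans ?_)
  rw [nsmul_eq_mul]
  refine mul_le_mul_of_nonneg_right ?_ (by positivity)
  have e8 : (I.card : ℝ) ≤ (I₀.card : ℝ) * ((SS (Finset.univ : Finset V) b).card : ℝ) := by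
    have := Finset.card_filter_le (I₀ ×ˢ SS (Finset.univ : Finset V) b)
      (fun i => i.1.2.2.2 ∈ i.1.1)
    rw [Finset.card_product] at this
    exact_mod_cast this
  refine e8.trans ?_
  have e9 := card_SS_le (Finset.univ : Finset V) b hy hy1
  rw [Finset.card_univ] at e9
  exact mul_le_mul (card_choices_le k r (r * m) hz hz1) e9 (by positivity) (by positivity)

/-! ### A lower bound for the class -/

open Classical in
/-- The graphs on `R ∪ W` without edges inside `R` that stay acyclic after `R` is contracted
to a point: forests on `R ∪ W` in which every tree meets `R` at most once, with `R` as the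
set of marked roots. -/
noncomputable def rootedForests {V : Type*} [Fintype V] (R W : Finset V) :
    Finset (SimpleGraph V) :=
  Finset.univ.filter (fun G => (∀ a b, G.Adj a b → (a ∈ R ∨ a ∈ W) ∧ ¬ (a ∈ R ∧ b ∈ R)) ∧
    ∀ S : Finset V, (∀ x ∈ S, x ∈ R ∨ x ∈ W) → (∃ x ∈ S, x ∈ W) → ∃ x ∈ S, x ∈ W ∧ (nb G S x).card ≤ 1)

/-- `G'` together with an edge from each `a ∈ A` to `f a`. -/
def attach {V : Type*} (A : Finset V) (f : V → V) (G' : SimpleGraph V) : SimpleGraph V :=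
  G' ⊔ SimpleGraph.fromRel (fun a b => a ∈ A ∧ b = f a)

lemma attach_adj {V : Type*} {A R W : Finset V} {f : V → V} {G' : SimpleGraph V}
    (hRW : Disjoint R W) (hAW : A ⊆ W) (hf : ∀ a ∈ A, f a ∈ R) {a b : V} :
    (attach A f G').Adj a b ↔ G'.Adj a b ∨ (a ∈ A ∧ b = f a) ∨ (b ∈ A ∧ a = f b) := by
  simp only [attach, SimpleGraph.sup_adj, SimpleGraph.fromRel_adj]
  constructor
  · tauto
  · rintro (h | ⟨h, rfl⟩ | ⟨h, rfl⟩)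
    · exact Or.inl h
    · refine Or.inr ⟨fun e => ?_, Or.inl ⟨h, rfl⟩⟩
      exact Finset.disjoint_left.1 hRW (hf a h) (e ▸ hAW h)
    · refine Or.inr ⟨fun e => ?_, Or.inr ⟨h, rfl⟩⟩
      exact Finset.disjoint_left.1 hRW (hf b h) (by rw [e]; exact hAW h)

lemma attach_mem {V : Type*} [Fintype V] [DecidableEq V] {A R W : Finset V} {f : V → V}
    {G' : SimpleGraph V}
    (hRW : Disjoint R W) (hAW : A ⊆ W) (hf : ∀ a ∈ A, f a ∈ R)
    (hG : G' ∈ rootedForests A (W \ A)) : attach A f G' ∈ rootedForests R W := by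
  simp only [rootedForests, Finset.mem_filter, Finset.mem_univ, true_and] at hG ⊢
  obtain ⟨h1, h2⟩ := hG
  have hW : ∀ a b, G'.Adj a b → a ∈ W ∧ b ∈ W := by
    intro a b hab
    have e1 := (h1 a b hab).1
    have e2 := (h1 b a hab.symm).1
    simp only [Finset.mem_sdiff] at e1 e2
    have := @hAW a
    have := @hAW b
    tauto
  have hd := Finset.disjoint_left.1 hRW
  refine ⟨?_, ?_⟩
  · intro a b hab
    rw [attach_adj hRW hAW hf] at hab
    rcases hab with h | ⟨h, rfl⟩ | ⟨h, rfl⟩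
    · exact ⟨Or.inr (hW a b h).1, fun e => hd e.1 (hW a b h).1⟩
    · exact ⟨Or.inr (hAW h), fun e => hd e.1 (hAW h)⟩
    · exact ⟨Or.inl (hf b h), fun e => hd e.2 (hAW h)⟩
  · rintro S hS ⟨x, hxS, hxW⟩
    by_cases hc : ∃ x ∈ S, x ∈ W \ A
    · obtain ⟨x, hxS, hx⟩ := hc
      obtain ⟨y, hy, hyW, hle⟩ := h2 (S ∩ W) (by
        intro z hz
        simp only [Finset.mem_inter, Finset.mem_sdiff] at hz ⊢
        tauto) ⟨x, Finset.mem_inter.2 ⟨hxS, (Finset.mem_sdiff.1 hx).1⟩, hx⟩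
      refine ⟨y, (Finset.mem_inter.1 hy).1, (Finset.mem_inter.1 hy).2,
        (Finset.card_le_card ?_).trans hle⟩
      intro z hz
      rw [mem_nb, attach_adj hRW hAW hf] at hz
      rw [mem_nb]
      obtain ⟨hzS, h | ⟨h, -⟩ | ⟨h, rfl⟩⟩ := hz
      · exact ⟨Finset.mem_inter.2 ⟨hzS, (hW _ _ h).2⟩, h⟩
      · exact absurd h (Finset.mem_sdiff.1 hyW).2
      · exact absurd (Finset.mem_sdiff.1 hyW).1 (hd (hf z h))
    · push Not at hc
      refine ⟨x, hxS, hxW, ?_⟩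
      have : nb (attach A f G') S x ⊆ {f x} := by
        intro z hz
        rw [mem_nb, attach_adj hRW hAW hf] at hz
        rw [Finset.mem_singleton]
        obtain ⟨hzS, h | ⟨-, h⟩ | ⟨h, rfl⟩⟩ := hz
        · exfalso
          have hzW := (hW _ _ h).2
          have e1 := hc x hxS
          have e2 := hc z hzS
          simp only [Finset.mem_sdiff, not_and, not_not] at e1 e2
          exact (h1 x z h).2 ⟨e1 hxW, e2 hzW⟩
        · exact h
        · exact absurd hxW (hd (hf z h))
      exact (Finset.card_le_card this).trans (by simp)

lemma attach_inj {V : Type*} [Fintype V] [DecidableEq V] {A A₂ R W : Finset V} {f f₂ : V → V}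
    {G' G₂ : SimpleGraph V} (hRW : Disjoint R W) (hAW : A ⊆ W) (hf : ∀ a ∈ A, f a ∈ R)
    (hG : G' ∈ rootedForests A (W \ A)) (hAW₂ : A₂ ⊆ W) (hf₂ : ∀ a ∈ A₂, f₂ a ∈ R)
    (hG₂ : G₂ ∈ rootedForests A₂ (W \ A₂)) (h : attach A f G' = attach A₂ f₂ G₂) :
    A = A₂ ∧ (∀ a ∈ A, f a = f₂ a) ∧ G' = G₂ := by
  have hd := Finset.disjoint_left.1 hRW
  have aux : ∀ {A : Finset V} {f : V → V} {G' : SimpleGraph V}, A ⊆ W → (∀ a ∈ A, f a ∈ R) →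
      G' ∈ rootedForests A (W \ A) →
      (∀ a b, (b ∈ R ∧ (attach A f G').Adj a b) ↔ (a ∈ A ∧ b = f a)) ∧
      (∀ a b, (a ∈ W ∧ b ∈ W ∧ (attach A f G').Adj a b) ↔ G'.Adj a b) := by
    intro A f G' hAW hf hG
    simp only [rootedForests, Finset.mem_filter, Finset.mem_univ, true_and] at hG
    obtain ⟨h1, -⟩ := hG
    have hW : ∀ a b, G'.Adj a b → a ∈ W ∧ b ∈ W := by
      intro a b hab
      have e1 := (h1 a b hab).1
      have e2 := (h1 b a hab.symm).1
      simp only [Finset.mem_sdiff] at e1 e2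
      have := @hAW a
      have := @hAW b
      tauto
    refine ⟨fun a b => ?_, fun a b => ?_⟩
    · rw [attach_adj hRW hAW hf]
      constructor
      · rintro ⟨hb, h | h | ⟨h, -⟩⟩
        · exact absurd (hW a b h).2 (hd hb)
        · exact h
        · exact absurd (hAW h) (hd hb)
      · rintro ⟨ha, rfl⟩
        exact ⟨hf a ha, Or.inr (Or.inl ⟨ha, rfl⟩)⟩
    · rw [attach_adj hRW hAW hf]
      constructor
      · rintro ⟨ha, hb, h | ⟨h, rfl⟩ | ⟨h, rfl⟩⟩
        · exact h
        · exact absurd hb (hd (hf a h))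
        · exact absurd ha (hd (hf b h))
      · intro h
        exact ⟨(hW a b h).1, (hW a b h).2, Or.inl h⟩
  obtain ⟨u1, u2⟩ := aux hAW hf hG
  obtain ⟨w1, w2⟩ := aux hAW₂ hf₂ hG₂
  rw [h] at u1 u2
  refine ⟨?_, ?_, ?_⟩
  · ext a
    constructor
    · intro ha
      exact ((w1 a (f a)).1 ((u1 a (f a)).2 ⟨ha, rfl⟩)).1
    · intro ha
      exact ((u1 a (f₂ a)).1 ((w1 a (f₂ a)).2 ⟨ha, rfl⟩)).1
  · intro a ha
    exact ((w1 a (f a)).1 ((u1 a (f a)).2 ⟨ha, rfl⟩)).2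
  · ext a b
    rw [← u2, ← w2]

lemma sum_choose_mul (j N : ℕ) :
    ∑ i ∈ Finset.range (N + 2), (N + 1).choose i * (j ^ i * (i * (N + 1) ^ (N + 1 - i))) =
      (N + 1) * (j * (j + (N + 1)) ^ N) := by
  rw [Finset.sum_range_succ', add_pow j (N + 1) N, Finset.mul_sum, Finset.mul_sum]
  simp only [pow_zero, Nat.zero_mul, mul_zero, add_zero]
  apply Finset.sum_congr rfl
  intro i hi
  have h := Nat.add_one_mul_choose_eq N i
  have e : N + 1 - (i + 1) = N - i := by omega
  rw [e]
  calc (N + 1).choose (i + 1) * (j ^ (i + 1) * ((i + 1) * (N + 1) ^ (N - i)))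
      = ((N + 1).choose (i + 1) * (i + 1)) * (j ^ (i + 1) * (N + 1) ^ (N - i)) := by ring
    _ = _ := by rw [← h, Nat.cast_id]; ring

/-- A Cayley-type bound. The induction removes `R`: the neighbours of `R` in `W` become the
new roots, and each of them chooses its neighbour in `R` freely. -/
lemma card_rootedForests {V : Type*} [Fintype V] [DecidableEq V] :
    ∀ (N : ℕ) (R W : Finset V), W.card = N → Disjoint R W →
      R.card * (R.card + N) ^ N ≤ (R.card + N) * (rootedForests R W).card := by
  intro N
  induction N using Nat.strong_induction_on with
  | _ N ih =>
  intro R W hW hRW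
  rcases Nat.eq_zero_or_pos N with rfl | hN
  · have : (⊥ : SimpleGraph V) ∈ rootedForests R W := by
      rw [Finset.card_eq_zero] at hW
      simp [rootedForests, hW]
    have := Finset.card_pos.2 ⟨_, this⟩
    simp only [pow_zero, mul_one, add_zero]
    exact Nat.le_mul_of_pos_right _ this
  rcases R.eq_empty_or_nonempty with rfl | hR
  · simp
  obtain ⟨N, rfl⟩ : ∃ N', N = N' + 1 := ⟨N - 1, by omega⟩
  set T : Finset (Σ _ : Finset V, (V → V) × SimpleGraph V) :=
    W.powerset.sigma (fun A => Fintype.piFinset (fun x => if x ∈ A then R else {x}) ×ˢ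
      rootedForests A (W \ A)) with hT
  have hmemT : ∀ t ∈ T, t.1 ⊆ W ∧ (∀ a ∈ t.1, t.2.1 a ∈ R) ∧ (∀ a ∉ t.1, t.2.1 a = a) ∧
      t.2.2 ∈ rootedForests t.1 (W \ t.1) := by
    rintro ⟨A, f, G'⟩ ht
    simp only [hT, Finset.mem_sigma, Finset.mem_powerset, Finset.mem_product,
      Fintype.mem_piFinset] at ht
    refine ⟨ht.1, fun a ha => ?_, fun a ha => ?_, ht.2.2⟩
    · have := ht.2.1 a
      rwa [if_pos ha] at this
    · have := ht.2.1 a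
      rw [if_neg ha] at this
      simpa using this
  have hle : T.card ≤ (rootedForests R W).card := by
    refine Finset.card_le_card_of_injOn (fun t => attach t.1 t.2.1 t.2.2) ?_ ?_
    · intro t ht
      obtain ⟨h1, h2, -, h4⟩ := hmemT t ht
      exact attach_mem hRW h1 h2 h4
    · rintro ⟨A, f, G'⟩ ht ⟨A₂, f₂, G₂⟩ ht₂ h
      obtain ⟨h1, h2, h3, h4⟩ := hmemT _ ht
      obtain ⟨g1, g2, g3, g4⟩ := hmemT _ ht₂
      obtain ⟨rfl, e2, rfl⟩ := attach_inj hRW h1 h2 h4 g1 g2 g4 h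
      have : f = f₂ := by
        ext a
        by_cases ha : a ∈ A
        · exact e2 a ha
        · exact (h3 a ha).trans (g3 a ha).symm
      rw [this]
  have hcardT : T.card = ∑ A ∈ W.powerset, R.card ^ A.card * (rootedForests A (W \ A)).card := by
    rw [hT, Finset.card_sigma]
    apply Finset.sum_congr rfl
    intro A _
    rw [Finset.card_product, Fintype.card_piFinset]
    congr 1
    have : ∀ x, (if x ∈ A then R else {x}).card = if x ∈ A then R.card else 1 := by
      intro x; split_ifs <;> simp
    simp only [this]
    rw [Finset.prod_ite]
    simp
  have hstep : ∀ A ∈ W.powerset, R.card ^ A.card * (A.card * (N + 1) ^ (N + 1 - A.card)) ≤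
      (N + 1) * (R.card ^ A.card * (rootedForests A (W \ A)).card) := by
    intro A hA
    rw [Finset.mem_powerset] at hA
    have hc := Finset.card_sdiff_of_subset hA
    have hle := Finset.card_le_card hA
    rcases Nat.eq_zero_or_pos A.card with h0 | h0
    · simp [h0]
    · have := ih (N + 1 - A.card) (by omega) A (W \ A) (by omega) Finset.disjoint_sdiff
      have e : A.card + (N + 1 - A.card) = N + 1 := by omega
      rw [e] at this
      calc _ ≤ R.card ^ A.card * ((N + 1) * (rootedForests A (W \ A)).card) := by gcongr
        _ = _ := by ring
  have hsum := Finset.sum_le_sum hstep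
  rw [← Finset.mul_sum, ← hcardT, Finset.sum_powerset_apply_card
    (fun i => R.card ^ i * (i * (N + 1) ^ (N + 1 - i))), hW] at hsum
  simp only [smul_eq_mul] at hsum
  rw [sum_choose_mul] at hsum
  have h1 := Nat.le_of_mul_le_mul_left hsum (by omega)
  calc R.card * (R.card + (N + 1)) ^ (N + 1)
      = (R.card + (N + 1)) * (R.card * (R.card + (N + 1)) ^ N) := by ring
    _ ≤ _ := Nat.mul_le_mul_left _ (h1.trans hle)

/-- `F` together with the edges listed in `E`. -/
def addEdges {V : Type*} (F : SimpleGraph V) (E : Finset (V × V)) : SimpleGraph V :=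
  F ⊔ SimpleGraph.fromRel (fun a b => (a, b) ∈ E)

lemma addEdges_adj {V : Type*} [Fintype V] [DecidableEq V] {F : SimpleGraph V} {K : Finset V}
    {E : Finset (V × V)} (hE : E ⊆ K ×ˢ Kᶜ) {a b : V} :
    (addEdges F E).Adj a b ↔ F.Adj a b ∨ (a, b) ∈ E ∨ (b, a) ∈ E := by
  simp only [addEdges, SimpleGraph.sup_adj, SimpleGraph.fromRel_adj]
  constructor
  · tauto
  · rintro (h | h)
    · exact Or.inl h
    · refine Or.inr ⟨?_, h⟩
      rintro rfl
      have h' : (a, a) ∈ E := h.elim id id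
      simpa using hE h'

lemma addEdges_parts {V : Type*} [Fintype V] [DecidableEq V] {F : SimpleGraph V} {K : Finset V}
    {E : Finset (V × V)} (hm : ∀ a b, F.Adj a b → a ∉ K) (hE : E ⊆ K ×ˢ Kᶜ) :
    (∀ a b, F.Adj a b ↔ (a ∉ K ∧ b ∉ K ∧ (addEdges F E).Adj a b)) ∧
    (∀ a b, (a, b) ∈ E ↔ (a ∈ K ∧ b ∉ K ∧ (addEdges F E).Adj a b)) := by
  have hEE : ∀ a b, (a, b) ∈ E → a ∈ K ∧ b ∉ K := by
    intro a b h
    have := hE h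
    simpa using this
  refine ⟨fun a b => ?_, fun a b => ?_⟩
  · rw [addEdges_adj hE]
    constructor
    · exact fun h => ⟨hm a b h, hm b a h.symm, Or.inl h⟩
    · rintro ⟨ha, hb, h | h | h⟩
      · exact h
      · exact absurd (hEE _ _ h).1 ha
      · exact absurd (hEE _ _ h).1 hb
  · rw [addEdges_adj hE]
    constructor
    · exact fun h => ⟨(hEE _ _ h).1, (hEE _ _ h).2, Or.inr (Or.inl h)⟩
    · rintro ⟨ha, hb, h | h | h⟩
      · exact absurd ha (hm a b h)
      · exact h
      · exact absurd ha (hEE _ _ h).2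

/-- Graphs made of a forest off a `k`-set `K` and arbitrary edges between `K` and its
complement have no `k + 1` disjoint cycles, since each cycle must use a vertex of `K`. -/
lemma exCount_ge (n k : ℕ) (hkn : k < n) :
    2 ^ (k * (n - k)) * (n - k) ^ (n - k) ≤ (n - k) ^ 2 * exCount n (k + 1) := by
  classical
  obtain ⟨K, -, hK⟩ := Finset.exists_subset_card_eq (s := (Finset.univ : Finset (Fin n)))
    (n := k) (by simp; omega)
  have hKc : Kᶜ.card = n - k := by rw [Finset.card_compl, hK]; simp
  obtain ⟨ρ, hρ⟩ := Finset.card_pos.1 (by omega : 0 < Kᶜ.card)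
  set W := Kᶜ.erase ρ with hWdef
  have hW : W.card = n - k - 1 := by rw [hWdef, Finset.card_erase_of_mem hρ, hKc]
  have hfor := card_rootedForests (n - k - 1) {ρ} W hW (by simp [hWdef])
  rw [Finset.card_singleton, one_mul, show 1 + (n - k - 1) = n - k by omega] at hfor
  have hmem : ∀ F ∈ rootedForests {ρ} W, (∀ a b, F.Adj a b → a ∉ K) ∧ NoCore F Kᶜ := by
    intro F hF
    simp only [rootedForests, Finset.mem_filter, Finset.mem_univ, true_and] at hF
    refine ⟨fun a b hab => ?_, fun S hS hc => ?_⟩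
    · rcases (hF.1 a b hab).1 with h | h
      · rw [Finset.mem_singleton] at h
        rw [h]; simpa using hρ
      · rw [hWdef, Finset.mem_erase] at h
        simpa using h.2
    · have hS' : ∀ x ∈ S, x ∈ ({ρ} : Finset (Fin n)) ∨ x ∈ W := by
        intro x hx
        have := hS hx
        simp only [hWdef, Finset.mem_singleton, Finset.mem_erase]
        tauto
      have hxW : ∃ x ∈ S, x ∈ W := by
        obtain ⟨x, hx⟩ := hc.1
        have h2 := hc.2 x hx
        obtain ⟨a, ha, b, hb, hab⟩ := Finset.one_lt_card.1 (by omega : 1 < (nb F S x).card)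
        rw [mem_nb] at ha hb
        have ha' := hS' a ha.1
        have hb' := hS' b hb.1
        rw [Finset.mem_singleton] at ha' hb'
        rcases ha' with h | h
        · rcases hb' with h' | h'
          · exact absurd (h.trans h'.symm) hab
          · exact ⟨b, hb.1, h'⟩
        · exact ⟨a, ha.1, h⟩
      obtain ⟨x, hx, -, hle⟩ := hF.2 S hS' hxW
      have := hc.2 x hx
      omega
  have hcount : (rootedForests {ρ} W ×ˢ (K ×ˢ Kᶜ).powerset).card ≤ exCount n (k + 1) := by
    rw [exCount, Nat.card_eq_fintype_card, Fintype.card_subtype]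
    refine Finset.card_le_card_of_injOn (fun t => addEdges t.1 t.2) ?_ ?_
    · rintro ⟨F, E⟩ ht
      simp only [Finset.coe_product, Set.mem_prod, Finset.mem_coe, Finset.mem_powerset] at ht
      obtain ⟨hF, hE⟩ := ht
      simp only [Finset.coe_filter, Finset.mem_univ, true_and, Set.mem_ofPred_eq]
      rw [hasDisjointCycles_iff]
      rintro ⟨S, hS, -, hd⟩
      have hmeet : ∀ i, ∃ x ∈ S i, x ∈ K := by
        intro i
        by_contra! hno
        apply (hmem F hF).2 (S i) (fun x hx => Finset.mem_compl.2 (hno x hx))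
        refine ⟨(hS i).1, fun x hx => ((hS i).2 x hx).trans (Finset.card_le_card ?_)⟩
        intro y hy
        rw [mem_nb, addEdges_adj hE] at hy
        rw [mem_nb]
        obtain ⟨hyS, h | h | h⟩ := hy
        · exact ⟨hyS, h⟩
        · exact absurd (Finset.mem_product.1 (hE h)).1 (hno x hx)
        · exact absurd (Finset.mem_product.1 (hE h)).1 (hno y hyS)
      choose x hxS hxK using hmeet
      have hinj : Function.Injective x := by
        intro i j hij
        by_contra hne
        exact Finset.disjoint_left.1 (hd i j hne) (hxS i) (hij ▸ hxS j)
      have : (Finset.univ.image x).card ≤ K.card := Finset.card_le_card (by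
        intro y hy
        obtain ⟨i, -, rfl⟩ := Finset.mem_image.1 hy
        exact hxK i)
      rw [Finset.card_image_of_injective _ hinj] at this
      simp at this
      omega
    · rintro ⟨F, E⟩ ht ⟨F₂, E₂⟩ ht₂ h
      simp only [Finset.coe_product, Set.mem_prod, Finset.mem_coe, Finset.mem_powerset] at ht ht₂
      obtain ⟨hF, hE⟩ := ht
      obtain ⟨hF₂, hE₂⟩ := ht₂
      obtain ⟨k1, k2⟩ := addEdges_parts (hmem F hF).1 hE
      obtain ⟨l1, l2⟩ := addEdges_parts (hmem F₂ hF₂).1 hE₂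
      simp only at h
      rw [h] at k1 k2
      have e1 : F = F₂ := by ext a b; rw [k1, l1]
      have e2 : E = E₂ := by ext ⟨a, b⟩; rw [k2, l2]
      rw [e1, e2]
  rw [Finset.card_product, Finset.card_powerset, Finset.card_product, hK, hKc] at hcount
  have hpow : (n - k) ^ (n - k) = (n - k) * (n - k) ^ (n - k - 1) := by
    rw [← pow_succ']; congr 1; omega
  calc 2 ^ (k * (n - k)) * (n - k) ^ (n - k)
      = 2 ^ (k * (n - k)) * ((n - k) * (n - k) ^ (n - k - 1)) := by rw [hpow]
    _ ≤ 2 ^ (k * (n - k)) * ((n - k) * ((n - k) * (rootedForests {ρ} W).card)) := by gcongr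
    _ = (n - k) ^ 2 * ((rootedForests {ρ} W).card * 2 ^ (k * (n - k))) := by ring
    _ ≤ _ := Nat.mul_le_mul_left _ hcount

/-! ### Estimates for the two counting bounds -/

lemma pow_le_exp_mul {x s : ℝ} (hx : 0 ≤ x) (h : x ≤ exp s) (j : ℕ) : x ^ j ≤ exp (j * s) := by
  rw [Real.exp_nat_mul]
  exact pow_le_pow_left₀ hx h j

lemma one_add_pow_le {x : ℝ} (hx : 0 ≤ x) (j : ℕ) : (1 + x) ^ j ≤ exp (j * x) :=
  pow_le_exp_mul (by linarith) (by linarith [Real.add_one_le_exp x]) j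

lemma add_pow_le_mul_exp {n : ℕ} (hn : 1 ≤ n) {x : ℝ} (hx : 0 ≤ x) :
    ((n : ℝ) + x) ^ n ≤ (n : ℝ) ^ n * exp x := by
  have hn' : (0 : ℝ) < n := by exact_mod_cast hn
  have h := one_add_pow_le (x := x / n) (by positivity) n
  have e : (n : ℝ) * (x / n) = x := by field_simp
  rw [e] at h
  have e2 : (n : ℝ) + x = n * (1 + x / n) := by field_simp
  rw [e2, mul_pow]
  gcongr

/-- The admissible sizes of the parameters for a graph on `n` vertices, measured in powers of
`t = n ^ (1 / (16 k + 40))`. With weights `z = t ^ (-2)` and `g = n ^ (1 / 4)`, all lower-order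
terms in the exponents are then at most a constant times `t ^ (16 k + 39) = n / t`. -/
structure Params (n k r m : ℕ) (t : ℝ) : Prop where
  one_le : 1 ≤ t
  pow_eq : t ^ (16 * k + 40) = n
  hr : (r : ℝ) ≤ t
  hm : (m : ℝ) ≤ (2 * k + 6) * t ^ (8 * k + 20)

namespace Params

variable {n k r m : ℕ} {t : ℝ}

lemma pow_le (h : Params n k r m t) {a b : ℕ} (hab : a ≤ b) : t ^ a ≤ t ^ b :=
  pow_le_pow_right₀ h.one_le hab

lemma one_le_n (h : Params n k r m t) : 1 ≤ n := by
  have := one_le_pow₀ (n := 16 * k + 40) h.one_le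
  rw [h.pow_eq] at this
  exact_mod_cast this

lemma rm_le (h : Params n k r m t) : (r : ℝ) * m ≤ (2 * k + 6) * t ^ (8 * k + 21) := by
  have h0 := h.one_le
  calc (r : ℝ) * m ≤ t * ((2 * k + 6) * t ^ (8 * k + 20)) := by
        apply mul_le_mul h.hr h.hm <;> positivity
    _ = _ := by ring

lemma size_le (h : Params n k r m t) :
    (k : ℝ) + r + r * m + 1 ≤ (3 * k + 8) * t ^ (8 * k + 21) := by
  have h1 := h.rm_le
  have h2 : t ^ 1 ≤ t ^ (8 * k + 21) := h.pow_le (by omega)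
  have h3 : (1 : ℝ) ≤ t ^ (8 * k + 21) := one_le_pow₀ h.one_le
  have h4 := h.hr
  have h5 : (k : ℝ) ≤ k * t ^ (8 * k + 21) := le_mul_of_one_le_right (by positivity) h3
  rw [pow_one] at h2
  linarith

lemma errS_le (h : Params n k r m t) :
    (errS k r m : ℝ) ≤ (5 * k + 9) * t ^ (8 * k + 22) := by
  have h0 : 0 ≤ t := zero_le_one.trans h.one_le
  have h1 : (k : ℝ) + r + r * m ≤ (3 * k + 8) * t ^ (8 * k + 21) := by linarith [h.size_le]
  have h2 : t ^ (2 * k + 3) ≤ t ^ (8 * k + 22) := h.pow_le (by omega)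
  have h3 : (r : ℝ) ^ ((k + 1) * 2) ≤ t ^ ((k + 1) * 2) :=
    pow_le_pow_left₀ (by positivity) h.hr _
  unfold errS
  push_cast
  calc (r : ℝ) * ((2 * k + 1) * r ^ ((k + 1) * 2)) + r * (k + r + r * m)
      ≤ t * ((2 * k + 1) * t ^ ((k + 1) * 2)) + t * ((3 * k + 8) * t ^ (8 * k + 21)) := by
        have := h.hr
        gcongr
    _ = (2 * k + 1) * t ^ (2 * k + 3) + (3 * k + 8) * t ^ (8 * k + 22) := by ring
    _ ≤ (2 * k + 1) * t ^ (8 * k + 22) + (3 * k + 8) * t ^ (8 * k + 22) := by gcongr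
    _ = _ := by ring

/-- The factors common to both counting bounds are subexponential. -/
lemma common_le (h : Params n k r m t) :
    ((t ^ 2) ^ (k + r + r * m) * (1 + (t ^ 2)⁻¹) ^ (3 * n) * n) *
      ((t ^ 2) ^ errS k r m * (1 + (t ^ 2)⁻¹) ^ (r * n)) ≤
    exp ((32 * k + 78) * t ^ (16 * k + 39)) := by
  have h0 := h.one_le
  have ht : t ≤ exp t := by linarith [Real.add_one_le_exp t]
  have ht2 : t ^ 2 ≤ exp (2 * t) := by
    have := pow_le_exp_mul (by linarith) ht 2
    exact_mod_cast this
  have hz : (0 : ℝ) ≤ (t ^ 2)⁻¹ := by positivity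
  have e1 := pow_le_exp_mul (by positivity) ht2 (k + r + r * m)
  have e2 := one_add_pow_le hz (3 * n)
  have e3 : (n : ℝ) ≤ exp ((16 * k + 40 : ℕ) * t) := by
    rw [← h.pow_eq]
    exact pow_le_exp_mul (by linarith) ht _
  have e4 := pow_le_exp_mul (by positivity) ht2 (errS k r m)
  have e5 := one_add_pow_le hz (r * n)
  calc _ ≤ (exp ((k + r + r * m : ℕ) * (2 * t)) * exp ((3 * n : ℕ) * (t ^ 2)⁻¹) *
        exp ((16 * k + 40 : ℕ) * t)) *
        (exp (errS k r m * (2 * t)) * exp ((r * n : ℕ) * (t ^ 2)⁻¹)) := by gcongr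
    _ = exp ((((k + r + r * m : ℕ) : ℝ) * (2 * t) + (3 * n : ℕ) * (t ^ 2)⁻¹ +
        (16 * k + 40 : ℕ) * t) + (errS k r m * (2 * t) + (r * n : ℕ) * (t ^ 2)⁻¹)) := by
        simp only [Real.exp_add]
    _ ≤ _ := by
        apply Real.exp_le_exp.2
        have hnz : (n : ℝ) * (t ^ 2)⁻¹ = t ^ (16 * k + 38) := by
          rw [← h.pow_eq, show 16 * k + 40 = 16 * k + 38 + 2 by omega, pow_add]
          field_simp
        have f1 : ((k : ℝ) + r + r * m) * (2 * t) ≤ (6 * k + 16) * t ^ (16 * k + 39) := by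
          calc _ ≤ ((3 * k + 8) * t ^ (8 * k + 21)) * (2 * t) := by
                gcongr; linarith [h.size_le]
            _ = (6 * k + 16) * t ^ (8 * k + 22) := by ring
            _ ≤ _ := by gcongr ?_ * ?_; exact h.pow_le (by omega)
        have f2 : t ^ (16 * k + 38) ≤ t ^ (16 * k + 39) := h.pow_le (by omega)
        have f3 : (16 * k + 40 : ℝ) * t ≤ (16 * k + 40) * t ^ (16 * k + 39) := by
          gcongr
          have : t ^ 1 ≤ t ^ (16 * k + 39) := h.pow_le (by omega)
          rwa [pow_one] at this
        have f4 : (errS k r m : ℝ) * (2 * t) ≤ (10 * k + 18) * t ^ (16 * k + 39) := by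
          calc _ ≤ ((5 * k + 9) * t ^ (8 * k + 22)) * (2 * t) := by
                gcongr; exact h.errS_le
            _ = (10 * k + 18) * t ^ (8 * k + 23) := by ring
            _ ≤ _ := by gcongr ?_ * ?_; exact h.pow_le (by omega)
        have f5 : (r : ℝ) * t ^ (16 * k + 38) ≤ t ^ (16 * k + 39) := by
          calc _ ≤ t * t ^ (16 * k + 38) := by gcongr; exact h.hr
            _ = _ := by ring
        push_cast
        rw [mul_assoc 3 (n : ℝ), mul_assoc (r : ℝ) (n : ℝ), hnz]
        linarith

/-- The bound for graphs with a vertex of large degree outside the apex set. -/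
lemma big_outside_le (h : Params n k r m t) {a : ℕ} (hn : 2 ≤ n)
    (ha : (n : ℝ) / Real.log n - 1 ≤ a) :
    (((t ^ 2)⁻¹⁻¹) ^ (k + r + r * m) * (1 + (t ^ 2)⁻¹) ^ (3 * n) * n) *
      ((t ^ (4 * k + 10)) ^ (k + r + r * m + 1) / (t ^ (4 * k + 10)) ^ a *
        (((t ^ 2)⁻¹⁻¹) ^ errS k r m * (1 + (t ^ 2)⁻¹) ^ (r * n) * 2 ^ (k * n)) *
        ((n : ℝ) + (r * m + 2) * (t ^ (4 * k + 10) * ((t ^ 2)⁻¹⁻¹) ^ (2 * k + 1))) ^ n) ≤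
    2 ^ (k * n) * (n : ℝ) ^ n *
      exp (-(n / 4) + (100 * (k + 10) ^ 2) * t ^ (16 * k + 39)) := by
  have h0 := h.one_le
  have ht0 : 0 < t := by linarith
  have ht : t ≤ exp t := by linarith [Real.add_one_le_exp t]
  rw [inv_inv]
  have hg : t ^ (4 * k + 10) ≤ exp ((4 * k + 10 : ℕ) * t) := pow_le_exp_mul (by linarith) ht _
  have e1 := pow_le_exp_mul (by positivity) hg (k + r + r * m + 1)
  -- `log n = 4 log g`, so `g ^ a` is about `exp (n / 4)`
  have e2 : exp (n / 4 - (4 * k + 10) * t) ≤ (t ^ (4 * k + 10)) ^ a := by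
    rw [← Real.exp_log (show 0 < (t ^ (4 * k + 10)) ^ a by positivity)]
    apply Real.exp_le_exp.2
    rw [Real.log_pow, Real.log_pow]
    have hlog : Real.log n = (16 * k + 40) * Real.log t := by
      rw [← h.pow_eq, Real.log_pow]; push_cast; ring
    have hlt : Real.log t ≤ t := Real.log_le_self ht0.le
    have hlp : 0 < Real.log n := Real.log_pos (by exact_mod_cast hn)
    have h1 : ((n : ℝ) / Real.log n - 1) * Real.log n ≤ a * Real.log n := by gcongr
    have h2 : ((n : ℝ) / Real.log n - 1) * Real.log n = n - Real.log n := by field_simp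
    rw [h2, hlog] at h1
    push_cast
    nlinarith
  have e3 := add_pow_le_mul_exp h.one_le_n
    (x := ((r : ℝ) * m + 2) * (t ^ (4 * k + 10) * (t ^ 2) ^ (2 * k + 1))) (by positivity)
  have e4 := h.common_le
  set P := (t ^ 2) ^ (k + r + r * m) * (1 + (t ^ 2)⁻¹) ^ (3 * n) * n with hP
  set Q := (t ^ 2) ^ errS k r m * (1 + (t ^ 2)⁻¹) ^ (r * n) with hQ
  set u := ((r : ℝ) * m + 2) * (t ^ (4 * k + 10) * (t ^ 2) ^ (2 * k + 1)) with hu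
  have hP0 : 0 ≤ P := by positivity
  have hQ0 : 0 ≤ Q := by positivity
  have e5 : (t ^ (4 * k + 10)) ^ (k + r + r * m + 1) / (t ^ (4 * k + 10)) ^ a ≤
      exp ((k + r + r * m + 1 : ℕ) * ((4 * k + 10 : ℕ) * t)) / exp (n / 4 - (4 * k + 10) * t) := by
    gcongr
  rw [← Real.exp_sub] at e5
  have f1 : ((k : ℝ) + r + r * m + 1) * ((4 * k + 10) * t) ≤
      ((3 * k + 8) * (4 * k + 10)) * t ^ (16 * k + 39) := by
    calc _ ≤ ((3 * k + 8) * t ^ (8 * k + 21)) * ((4 * k + 10) * t) := by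
          gcongr; exact h.size_le
      _ = ((3 * k + 8) * (4 * k + 10)) * t ^ (8 * k + 22) := by ring
      _ ≤ _ := by gcongr ?_ * ?_; exact h.pow_le (by omega)
  have f2 : t ≤ t ^ (16 * k + 39) := by
    have : t ^ 1 ≤ t ^ (16 * k + 39) := h.pow_le (by omega)
    rwa [pow_one] at this
  have f3 : u ≤ (3 * k + 8) * t ^ (16 * k + 39) := by
    have h1 := h.rm_le
    have h3 : (1 : ℝ) ≤ t ^ (8 * k + 21) := one_le_pow₀ h.one_le
    have h5 : (0 : ℝ) ≤ k * t ^ (8 * k + 21) := by positivity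
    calc u ≤ ((3 * k + 8) * t ^ (8 * k + 21)) * (t ^ (4 * k + 10) * (t ^ 2) ^ (2 * k + 1)) := by
          rw [hu]; gcongr; linarith
      _ = (3 * k + 8) * t ^ (16 * k + 33) := by rw [← pow_mul]; ring
      _ ≤ _ := by gcongr ?_ * ?_; exact h.pow_le (by omega)
  calc P * ((t ^ (4 * k + 10)) ^ (k + r + r * m + 1) / (t ^ (4 * k + 10)) ^ a *
        (Q * 2 ^ (k * n)) * ((n : ℝ) + u) ^ n)
      ≤ P * (exp ((k + r + r * m + 1 : ℕ) * ((4 * k + 10 : ℕ) * t) - (n / 4 - (4 * k + 10) * t)) *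
        (Q * 2 ^ (k * n)) * ((n : ℝ) ^ n * exp u)) := by gcongr
    _ = 2 ^ (k * n) * (n : ℝ) ^ n * ((P * Q) *
        (exp ((k + r + r * m + 1 : ℕ) * ((4 * k + 10 : ℕ) * t) - (n / 4 - (4 * k + 10) * t)) *
        exp u)) := by ring
    _ ≤ 2 ^ (k * n) * (n : ℝ) ^ n * (exp ((32 * k + 78) * t ^ (16 * k + 39)) *
        (exp ((k + r + r * m + 1 : ℕ) * ((4 * k + 10 : ℕ) * t) - (n / 4 - (4 * k + 10) * t)) *
        exp u)) := by gcongr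
    _ ≤ _ := by
        rw [← Real.exp_add, ← Real.exp_add]
        refine mul_le_mul_of_nonneg_left (Real.exp_le_exp.2 ?_) (by positivity)
        push_cast
        have f4 : (4 * k + 10 : ℝ) * t ≤ (4 * k + 10) * t ^ (16 * k + 39) := by gcongr
        have f5 : (32 * k + 78 + ((3 * k + 8) * (4 * k + 10)) + (4 * k + 10) + (3 * k + 8) : ℝ) ≤
            100 * (k + 10) ^ 2 := by
          have : (0 : ℝ) ≤ k := by positivity
          nlinarith
        have f6 := mul_le_mul_of_nonneg_right f5 (show 0 ≤ t ^ (16 * k + 39) by positivity)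
        linarith

/-- The bound for graphs with an apex vertex outside a small blocker. One apex vertex loses
its free choices, a factor `2 ^ (-n)` that outweighs the cost of describing the blocker. -/
lemma missing_le (h : Params n k r m t) (hk : 1 ≤ k) {b : ℕ} (hb : (b : ℝ) ≤ n / 100) :
    (((t ^ 2)⁻¹⁻¹) ^ (k + r + r * m) * (1 + (t ^ 2)⁻¹) ^ (3 * n) * n) *
      ((((1 / 10 : ℝ))⁻¹) ^ b * (1 + (1 / 10 : ℝ)) ^ n) *
      (((t ^ 2)⁻¹⁻¹) ^ errS k r m * (1 + (t ^ 2)⁻¹) ^ (r * n) * 2 ^ ((k - 1) * n) *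
        ((((1 / 10 : ℝ))⁻¹) ^ (k + r + b) * (1 + (1 / 10 : ℝ)) ^ n) *
        ((n : ℝ) + b * ((1 / 10 : ℝ))⁻¹ +
          (r * m + 1) * (((t ^ 2)⁻¹⁻¹) ^ (2 * k + 1) * ((1 / 10 : ℝ))⁻¹)) ^ n) ≤
    2 ^ (k * n) * (n : ℝ) ^ n *
      exp (-(n / 4) + (100 * (k + 10) ^ 2) * t ^ (16 * k + 39)) := by
  have h0 := h.one_le
  have ht0 : 0 < t := by linarith
  rw [inv_inv, show ((1 / 10 : ℝ))⁻¹ = 10 by norm_num]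
  have h10 : (10 : ℝ) ≤ exp (14 / 5) := by
    rw [← Real.log_le_iff_le_exp (by norm_num)]
    calc Real.log 10 ≤ Real.log (2 ^ 4) := Real.log_le_log (by norm_num) (by norm_num)
      _ = 4 * Real.log 2 := by rw [Real.log_pow]; norm_num
      _ ≤ _ := by linarith [Real.log_two_lt_d9]
  have e1 := pow_le_exp_mul (by norm_num) h10 b
  have e2 := pow_le_exp_mul (by norm_num) h10 (k + r + b)
  have e3 := one_add_pow_le (x := 1 / 10) (by norm_num) n
  have e4 := add_pow_le_mul_exp h.one_le_n
    (x := (b : ℝ) * 10 + (r * m + 1) * ((t ^ 2) ^ (2 * k + 1) * 10)) (by positivity)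
  rw [← add_assoc] at e4
  have e5 := h.common_le
  have e6 : (2 : ℝ) ^ ((k - 1) * n) ≤ 2 ^ (k * n) * exp (-(n * (69 / 100))) := by
    have h1 : exp (n * (69 / 100)) ≤ (2 : ℝ) ^ n := by
      rw [Real.exp_nat_mul]
      apply pow_le_pow_left₀ (Real.exp_pos _).le
      rw [← Real.le_log_iff_exp_le (by norm_num)]
      linarith [Real.log_two_gt_d9]
    have h2 : k * n = (k - 1) * n + n := by
      obtain ⟨j, rfl⟩ : ∃ j, k = j + 1 := ⟨k - 1, by omega⟩
      simp; ring
    rw [h2, pow_add, Real.exp_neg, mul_assoc]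
    apply le_mul_of_one_le_right (by positivity)
    rw [← div_eq_mul_inv, one_le_div (Real.exp_pos _)]
    exact h1
  set P := (t ^ 2) ^ (k + r + r * m) * (1 + (t ^ 2)⁻¹) ^ (3 * n) * n with hP
  set Q := (t ^ 2) ^ errS k r m * (1 + (t ^ 2)⁻¹) ^ (r * n) with hQ
  set u := (b : ℝ) * 10 + (r * m + 1) * ((t ^ 2) ^ (2 * k + 1) * 10) with hu
  have hP0 : 0 ≤ P := by positivity
  have hQ0 : 0 ≤ Q := by positivity
  have f3 : u ≤ n / 10 + (30 * k + 80) * t ^ (16 * k + 39) := by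
    have h1 := h.rm_le
    have h3 : (1 : ℝ) ≤ t ^ (8 * k + 21) := one_le_pow₀ h.one_le
    have h5 : (0 : ℝ) ≤ k * t ^ (8 * k + 21) := by positivity
    have : ((r : ℝ) * m + 1) * ((t ^ 2) ^ (2 * k + 1) * 10) ≤
        (30 * k + 80) * t ^ (16 * k + 39) := by
      calc _ ≤ ((3 * k + 8) * t ^ (8 * k + 21)) * ((t ^ 2) ^ (2 * k + 1) * 10) := by
            gcongr; linarith
        _ = (30 * k + 80) * t ^ (12 * k + 23) := by rw [← pow_mul]; ring
        _ ≤ _ := by gcongr ?_ * ?_; exact h.pow_le (by omega)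
    rw [hu]
    linarith
  have f4 : (k : ℝ) + r ≤ (3 * k + 8) * t ^ (16 * k + 39) := by
    have : 0 ≤ (r : ℝ) * m := by positivity
    calc (k : ℝ) + r ≤ (3 * k + 8) * t ^ (8 * k + 21) := by linarith [h.size_le]
      _ ≤ _ := by gcongr ?_ * ?_; exact h.pow_le (by omega)
  calc P * (10 ^ b * (1 + 1 / 10) ^ n) * (Q * 2 ^ ((k - 1) * n) *
        (10 ^ (k + r + b) * (1 + 1 / 10) ^ n) *
        ((n : ℝ) + b * 10 + (r * m + 1) * ((t ^ 2) ^ (2 * k + 1) * 10)) ^ n)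
      ≤ P * (exp (b * (14 / 5)) * exp (n * (1 / 10))) *
        (Q * (2 ^ (k * n) * exp (-(n * (69 / 100)))) *
        (exp ((k + r + b : ℕ) * (14 / 5)) * exp (n * (1 / 10))) * ((n : ℝ) ^ n * exp u)) := by
        gcongr
    _ = 2 ^ (k * n) * (n : ℝ) ^ n * ((P * Q) *
        (exp (b * (14 / 5)) * exp (n * (1 / 10)) * exp (-(n * (69 / 100))) *
        exp ((k + r + b : ℕ) * (14 / 5)) * exp (n * (1 / 10)) * exp u)) := by ring
    _ ≤ 2 ^ (k * n) * (n : ℝ) ^ n * (exp ((32 * k + 78) * t ^ (16 * k + 39)) *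
        (exp (b * (14 / 5)) * exp (n * (1 / 10)) * exp (-(n * (69 / 100))) *
        exp ((k + r + b : ℕ) * (14 / 5)) * exp (n * (1 / 10)) * exp u)) := by gcongr
    _ ≤ _ := by
        simp only [← Real.exp_add]
        refine mul_le_mul_of_nonneg_left (Real.exp_le_exp.2 ?_) (by positivity)
        push_cast
        have f5 : (32 * k + 78 + 3 * (3 * k + 8) + (30 * k + 80) : ℝ) ≤
            100 * (k + 10) ^ 2 := by
          have : (0 : ℝ) ≤ k := by positivity
          nlinarith
        have f6 := mul_le_mul_of_nonneg_right f5 (show 0 ≤ t ^ (16 * k + 39) by positivity)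
        have f7 : (0 : ℝ) ≤ (k : ℝ) + r := by positivity
        linarith

end Params

/-! ### Large `n` -/

/-- The parameters delivered by `exists_decomp` are admissible: the number of marked vertices
is logarithmic in `n`, hence below any fixed power of `n`. -/
lemma exists_params (k : ℕ) (C : ℝ) : ∃ n0 : ℕ, ∀ n ≥ n0, ∃ t : ℝ, C ≤ t ∧
    Params n k ((2 * (Nat.log 2 n + 1) + 2) * (k + 1)) ((k + 3) * (Nat.sqrt n + 1)) t := by
  set q : ℝ := (((16 * k + 40 : ℕ) : ℝ))⁻¹ with hq
  have hq0 : 0 < q := by rw [hq]; positivity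
  have hcast : Tendsto (fun n : ℕ => (n : ℝ)) atTop atTop := tendsto_natCast_atTop_atTop
  have h1 : ∀ᶠ n : ℕ in atTop, ‖Real.log n‖ ≤ (8 * (k + 1) : ℝ)⁻¹ * ‖(n : ℝ) ^ q‖ :=
    hcast.eventually ((isLittleO_log_rpow_atTop hq0).def (by positivity))
  have h2 : ∀ᶠ n : ℕ in atTop, max C (8 * (k + 1)) ≤ (n : ℝ) ^ q :=
    hcast.eventually ((tendsto_rpow_atTop hq0).eventually_ge_atTop _)
  obtain ⟨n0, hn0⟩ := eventually_atTop.1 ((h1.and h2).and (eventually_ge_atTop 1))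
  refine ⟨n0, fun n hn => ⟨(n : ℝ) ^ q, ?_, ?_⟩⟩
  · exact (le_max_left _ _).trans (hn0 n hn).1.2
  obtain ⟨⟨a1, a2⟩, a3⟩ := hn0 n hn
  set t : ℝ := (n : ℝ) ^ q with ht
  have hn1 : (1 : ℝ) ≤ n := by exact_mod_cast a3
  have hpow : t ^ (16 * k + 40) = n := by
    rw [ht, hq]
    exact Real.rpow_inv_natCast_pow (by positivity) (by omega)
  have a2' : (8 * (k + 1) : ℝ) ≤ t := (le_max_right _ _).trans a2
  have hk0 : (0 : ℝ) ≤ k := by positivity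
  have ht1 : 1 ≤ t := by linarith
  have hlog0 : 0 ≤ Real.log n := Real.log_nonneg hn1
  rw [Real.norm_of_nonneg hlog0, Real.norm_of_nonneg (by linarith)] at a1
  refine ⟨ht1, hpow, ?_, ?_⟩
  · have hl : (Nat.log 2 n : ℝ) ≤ 2 * Real.log n := by
      have e : ((2 : ℕ) : ℝ) ^ Nat.log 2 n ≤ n := by
        exact_mod_cast Nat.pow_log_le_self 2 (by omega)
      have e2 := Real.log_le_log (by positivity) e
      rw [Real.log_pow] at e2
      have := Real.log_two_gt_d9
      have h3 : (0 : ℝ) ≤ Nat.log 2 n := by positivity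
      push_cast at e2
      nlinarith
    have hb : Real.log n * (8 * (k + 1)) ≤ t := by
      rw [inv_mul_eq_div, le_div_iff₀ (by positivity)] at a1
      exact a1
    push_cast
    calc (2 * ((Nat.log 2 n : ℝ) + 1) + 2) * (k + 1)
        ≤ (2 * (2 * Real.log n + 1) + 2) * (k + 1) := by gcongr
      _ = (Real.log n * (8 * (k + 1)) + 8 * (k + 1)) / 2 := by ring
      _ ≤ t := by linarith
  · have hs : (Nat.sqrt n : ℝ) ≤ t ^ (8 * k + 20) := by
      refine (sq_le_sq₀ (by positivity) (by positivity)).1 ?_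
      rw [← pow_mul, show (8 * k + 20) * 2 = 16 * k + 40 by ring, hpow]
      exact_mod_cast Nat.sqrt_le' n
    have h3 : (1 : ℝ) ≤ t ^ (8 * k + 20) := one_le_pow₀ ht1
    push_cast
    calc ((k : ℝ) + 3) * (Nat.sqrt n + 1) ≤ (k + 3) * (2 * t ^ (8 * k + 20)) := by
          gcongr; linarith
      _ = _ := by ring

/-- The lower bound for the class in the form needed for the comparison. -/
lemma exCount_lower (k : ℕ) : ∃ n0 : ℕ, ∀ n ≥ n0,
    2 * (2 ^ (k * n) * (n : ℝ) ^ n * exp (-(n / 10))) ≤ exCount n (k + 1) := by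
  have hcast : Tendsto (fun n : ℕ => (n : ℝ)) atTop atTop := tendsto_natCast_atTop_atTop
  set D : ℝ := 2 * 2 ^ (k * k) * exp k with hD
  have hD0 : 0 < D := by positivity
  have h1 : ∀ᶠ n : ℕ in atTop, ‖(n : ℝ) ^ (k + 2)‖ ≤ D⁻¹ * ‖exp ((1 / 10) * (n : ℝ))‖ :=
    hcast.eventually ((isLittleO_pow_exp_pos_mul_atTop (k + 2)
      (by norm_num : (0 : ℝ) < 1 / 10)).def (by positivity))
  obtain ⟨n0, hn0⟩ := eventually_atTop.1 (h1.and (eventually_ge_atTop (k + 1)))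
  refine ⟨n0, fun n hn => ?_⟩
  obtain ⟨a1, a2⟩ := hn0 n hn
  rw [Real.norm_of_nonneg (by positivity), Real.norm_of_nonneg (by positivity),
    inv_mul_eq_div, le_div_iff₀ hD0] at a1
  obtain ⟨s, rfl⟩ : ∃ s, n = s + k := ⟨n - k, by omega⟩
  have hs : 1 ≤ s := by omega
  have hs' : (1 : ℝ) ≤ s := by exact_mod_cast hs
  have hlow := exCount_ge (s + k) k (by omega)
  rw [Nat.add_sub_cancel] at hlow
  have hlow' : (2 : ℝ) ^ (k * s) * (s : ℝ) ^ s ≤ (s : ℝ) ^ 2 * exCount (s + k) (k + 1) := by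
    exact_mod_cast hlow
  have h3 := add_pow_le_mul_exp hs (x := (k : ℝ)) (by positivity)
  push_cast at a1 ⊢
  set N : ℝ := (s : ℝ) + k with hN
  have hsN : (s : ℝ) ≤ N := by rw [hN]; linarith [show (0 : ℝ) ≤ k by positivity]
  have hN0 : 0 ≤ N := by linarith
  have hs2 : (0 : ℝ) < (s : ℝ) ^ 2 := by positivity
  refine le_of_mul_le_mul_left ?_ hs2
  refine le_trans ?_ hlow'
  have hexp : exp ((1 / 10) * N) * exp (-(N / 10)) = 1 := by
    rw [← Real.exp_add]; simp; ring
  calc (s : ℝ) ^ 2 * (2 * (2 ^ (k * (s + k)) * N ^ (s + k) * exp (-(N / 10))))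
      ≤ N ^ 2 * (2 * (2 ^ (k * (s + k)) * N ^ (s + k) * exp (-(N / 10)))) := by gcongr
    _ = 2 ^ (k * s) * N ^ s * (N ^ (k + 2) * (2 * 2 ^ (k * k))) * exp (-(N / 10)) := by ring
    _ ≤ 2 ^ (k * s) * ((s : ℝ) ^ s * exp k) * (N ^ (k + 2) * (2 * 2 ^ (k * k))) *
        exp (-(N / 10)) := by gcongr
    _ = 2 ^ (k * s) * (s : ℝ) ^ s * (N ^ (k + 2) * D) * exp (-(N / 10)) := by rw [hD]; ring
    _ ≤ 2 ^ (k * s) * (s : ℝ) ^ s * exp ((1 / 10) * N) * exp (-(N / 10)) := by gcongr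
    _ = 2 ^ (k * s) * (s : ℝ) ^ s := by rw [mul_assoc, hexp, mul_one]

/-- The two ways in which a graph of the class can have a small blocker missing a vertex of
large degree, each bounded by its weighted count. -/
lemma card_bad_le {n k r m a b : ℕ} (S : Finset (SimpleGraph (Fin n)))
    {z g y : ℝ} (hz : 0 < z) (hz1 : z ≤ 1) (hg : 1 ≤ g) (hy : 0 < y) (hy1 : y ≤ 1)
    (hS : ∀ G ∈ S, ∃ K M X p rk v B, IsDecomp G k r m K M X p rk ∧ v ∉ B ∧
      NoCore G Bᶜ ∧ B.card ≤ b ∧ a ≤ (nb G Finset.univ v).card) :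
    (S.card : ℝ) ≤
      ((z⁻¹) ^ (k + r + r * m) * (1 + z) ^ (3 * n) * n) *
      (g ^ (k + r + r * m + 1) / g ^ a * ((z⁻¹) ^ errS k r m *
        (1 + z) ^ (r * n) * 2 ^ (k * n)) *
        ((n : ℝ) + (r * m + 2) * (g * (z⁻¹) ^ (2 * k + 1))) ^ n) +
      ((z⁻¹) ^ (k + r + r * m) * (1 + z) ^ (3 * n) * n) *
      ((y⁻¹) ^ b * (1 + y) ^ n) *
      ((z⁻¹) ^ errS k r m * (1 + z) ^ (r * n) * 2 ^ ((k - 1) * n) *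
        ((y⁻¹) ^ (k + r + b) * (1 + y) ^ n) *
        ((n : ℝ) + b * y⁻¹ + (r * m + 1) * ((z⁻¹) ^ (2 * k + 1) * y⁻¹)) ^ n) := by
  classical
  set P : SimpleGraph (Fin n) → Prop := fun G => ∃ K M X p rk v, IsDecomp G k r m K M X p rk ∧
    v ∉ K ∧ a ≤ (nb G Finset.univ v).card with hP
  have h1 := card_big_outside k r m a hz hz1 hg (S.filter P)
    (fun G hG => (Finset.mem_filter.1 hG).2)
  have h2 := card_missing k r m b hz hz1 hy hy1 (S.filter (fun G => ¬ P G)) (by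
    intro G hG
    obtain ⟨hGS, hGP⟩ := Finset.mem_filter.1 hG
    obtain ⟨K, M, X, p, rk, v, B, hd, hvB, hB, hBb, hv⟩ := hS G hGS
    refine ⟨K, M, X, p, rk, v, B, hd, ?_, hvB, hB, hBb⟩
    by_contra hvK
    exact hGP ⟨K, M, X, p, rk, v, hd, hvK, hv⟩)
  rw [Fintype.card_fin] at h1 h2
  rw [← Finset.card_filter_add_card_filter_not P (s := S), Nat.cast_add]
  exact add_le_add h1 h2

end FDC

/-- there is δ > 0 so that for each positive k, with probability
1 − e^{-Ω(n)} every blocker of G not containing S(G) has size greater than δn. -/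
theorem stmt_8 :
    ∃ δ : ℝ, 0 < δ ∧ ∀ k : ℕ, 1 ≤ k →
      ∃ c : ℝ, 0 < c ∧ ∃ n0 : ℕ, ∀ n ≥ n0,
        (Nat.card {G : SimpleGraph (Fin n) // ¬ HasDisjointCycles G (k + 1) ∧
            ∃ B : Set (Fin n), IsBlocker G B ∧ ¬ bigDegSet n G ⊆ B ∧
              (B.ncard : ℝ) ≤ δ * n} : ℝ)
          ≤ Real.exp (-c * n) * (exCount n (k + 1) : ℝ) := by
  classical
  refine ⟨1 / 100, by norm_num, fun k hk => ⟨1 / 10, by norm_num, ?_⟩⟩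
  set C : ℝ := 100 * (k + 10) ^ 2 with hC
  obtain ⟨n1, h1⟩ := FDC.exists_params k (20 * C)
  obtain ⟨n2, h2⟩ := FDC.exCount_lower k
  refine ⟨max 2 (max n1 n2), fun n hn => ?_⟩
  have hn0 : 2 ≤ n := (le_max_left _ _).trans hn
  have hn1 : n1 ≤ n := (le_max_left _ _).trans ((le_max_right _ _).trans hn)
  have hn2 : n2 ≤ n := (le_max_right _ _).trans ((le_max_right _ _).trans hn)
  obtain ⟨t, htC, hpar⟩ := h1 n hn1
  have hlow := h2 n hn2
  set r := (2 * (Nat.log 2 n + 1) + 2) * (k + 1) with hr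
  set m := (k + 3) * (Nat.sqrt n + 1) with hm
  have ht1 := hpar.one_le
  set a := ⌊(n : ℝ) / Real.log n⌋₊ with ha
  set b := ⌊(n : ℝ) / 100⌋₊ with hb
  have ha' : (n : ℝ) / Real.log n - 1 ≤ a := (Nat.sub_one_lt_floor _).le
  have hb' : (b : ℝ) ≤ n / 100 := Nat.floor_le (by positivity)
  rw [Nat.card_eq_fintype_card, Fintype.card_subtype]
  have hbad := FDC.card_bad_le (k := k) (r := r) (m := m) (a := a) (b := b)
    (z := (t ^ 2)⁻¹) (g := t ^ (4 * k + 10)) (y := 1 / 10)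
    (Finset.univ.filter (fun G : SimpleGraph (Fin n) => ¬ HasDisjointCycles G (k + 1) ∧
            ∃ B : Set (Fin n), IsBlocker G B ∧ ¬ bigDegSet n G ⊆ B ∧
              (B.ncard : ℝ) ≤ 1 / 100 * n))
    (by positivity) (inv_le_one_of_one_le₀ (one_le_pow₀ ht1)) (one_le_pow₀ ht1)
    (by norm_num) (by norm_num) (by
      intro G hG
      obtain ⟨-, hpack, B, hB, hsub, hcard⟩ := Finset.mem_filter.1 hG
      rw [FDC.hasDisjointCycles_iff] at hpack
      obtain ⟨v, hv, hvB⟩ := Set.not_subset.1 hsub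
      obtain ⟨K, M, X, p, rk, hd⟩ := FDC.exists_decomp G k (Nat.log 2 n + 1) (Nat.sqrt n + 1)
        (by omega) (by simpa using Nat.lt_pow_succ_log_self (by norm_num) n) (by omega)
        (by simpa using (Nat.lt_succ_sqrt n).le) hpack
      refine ⟨K, M, X, p, rk, v, B.toFinset, hd, by simpa using hvB,
        FDC.noCore_of_blocker hB (by simp), ?_, ?_⟩
      · rw [Set.ncard_eq_toFinset_card'] at hcard
        apply Nat.le_floor
        linarith
      · have hdeg : (FDC.nb G Finset.univ v).card = (G.neighborSet v).ncard := by
          rw [← Set.ncard_coe_finset]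
          congr 1
          ext y
          simp
        rw [hdeg]
        exact (Nat.floor_le_floor hv.le).trans (by simp))
  have hmain := hbad.trans (add_le_add (hpar.big_outside_le hn0 ha') (hpar.missing_le hk hb'))
  have hexp : exp (-((n : ℝ) / 4) + C * t ^ (16 * k + 39)) ≤
      exp (-(1 / 10) * n) * exp (-((n : ℝ) / 10)) := by
    rw [← Real.exp_add]
    apply Real.exp_le_exp.2
    have h3 : 20 * C * t ^ (16 * k + 39) ≤ t * t ^ (16 * k + 39) := by gcongr
    have h4 : t * t ^ (16 * k + 39) = n := by rw [← hpar.pow_eq]; ring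
    linarith
  calc _ ≤ _ := hmain
    _ = 2 * (2 ^ (k * n) * (n : ℝ) ^ n * exp (-((n : ℝ) / 4) + C * t ^ (16 * k + 39))) := by ring
    _ ≤ 2 * (2 ^ (k * n) * (n : ℝ) ^ n *
        (exp (-(1 / 10) * n) * exp (-((n : ℝ) / 10)))) := by gcongr
    _ = exp (-(1 / 10) * n) * (2 * (2 ^ (k * n) * (n : ℝ) ^ n * exp (-((n : ℝ) / 10)))) := by ring
    _ ≤ _ := by gcongr
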